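/- For all real numbers η > 1 and τ > 1 there exists a constant C > 0, depending only on n, p, α, η, τ, C₁ and C₂, with the following property: if u is a nonnegative C¹ solution of div A(x,Du) + b(x)|Du|^α ≥ q(x)g(u) in ℝⁿ and 0 < r₁ < r₂ are real numbers with τ^{1/2}·r₁ ≤ r₂ and 0 < M(r₂;u) ≤ η^{1/2}·M(r₁;u), then at least one of the following two inequalities holds: (i) ∫_{M(r₁;u)}^{M(r₂;u)} g_η(t)^{−1/α} dt ≥ C·∫_{r₁}^{r₂} (ξ·f_τ(ξ))^{1/(p−1)} dξ; (ii) ∫_{M(r₁;u)}^{M(r₂;u)} g_η(t)^{−1/(p−1)} dt ≥ C·∫_{r₁}^{r₂} (ξ·f_τ(ξ))^{1/(p−1)} dξ. -/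

import Mathlib

open MeasureTheory Metric Set Filter
open scoped RealInnerProductSpace ENNReal

noncomputable section

abbrev Euc (n : ℕ) := EuclideanSpace ℝ (Fin n)

/-- Weak solution of `div A(x,Dv) + b(x)|Dv|^α ≥ a(x)` on an open set `U`:
for every nonnegative test function `φ ∈ C₀^∞(U)`,
`-∫ A(x,Dv)·Dφ + ∫ b |Dv|^α φ ≥ ∫ a φ`. -/
def IsWeakSol {n : ℕ} (A : Euc n → Euc n → Euc n) (b : Euc n → ℝ) (α : ℝ)
    (a : Euc n → ℝ) (U : Set (Euc n)) (v : Euc n → ℝ) : Prop :=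
  ∀ φ : Euc n → ℝ, ContDiff ℝ (⊤ : ℕ∞) φ → HasCompactSupport φ → tsupport φ ⊆ U →
    (∀ x, 0 ≤ φ x) →
    (∫ x in U, a x * φ x) ≤
      (-(∫ x in U, ⟪A x (gradient v x), gradient φ x⟫)) +
        ∫ x in U, b x * ‖gradient v x‖ ^ α * φ x

/-- Structural conditions on `A`: measurability, coercivity and growth. -/
def StructCond {n : ℕ} (A : Euc n → Euc n → Euc n) (p C₁ C₂ : ℝ) : Prop :=
  Measurable (Function.uncurry A) ∧
    ∀ x ζ : Euc n, C₁ * ‖ζ‖ ^ p ≤ ⟪ζ, A x ζ⟫ ∧ ‖A x ζ‖ ≤ C₂ * ‖ζ‖ ^ (p - 1)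

/-- Locally bounded function on `ℝⁿ`. -/
def LocBdd {n : ℕ} (b : Euc n → ℝ) : Prop :=
  ∀ K : Set (Euc n), IsCompact K → ∃ C, ∀ x ∈ K, b x ≤ C

/-- `M(r; u) = max_{|x| = r} u x`. -/
def sphMax {n : ℕ} (u : Euc n → ℝ) (r : ℝ) : ℝ := sSup (u '' Metric.sphere (0 : Euc n) r)

/-- `g_θ(t) = inf_{s ∈ (t/θ, θ t)} g s`. -/
def ginf (g : ℝ → ℝ) (θ t : ℝ) : ℝ := sInf (g '' Set.Ioo (t / θ) (θ * t))

/-- The open annulus `{x : r₁ < |x| < r₂}`. -/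
def Ann (n : ℕ) (r₁ r₂ : ℝ) : Set (Euc n) := {x : Euc n | r₁ < ‖x‖ ∧ ‖x‖ < r₂}

/-- `q_σ(r) = ess inf_{r/σ < |x| < σ r} q x`. -/
def qinf {n : ℕ} (q : Euc n → ℝ) (σ r : ℝ) : ℝ :=
  essInf q (volume.restrict (Ann n (r / σ) (σ * r)))

/-- `f_σ(r) = q_σ(r) / (1 + r q_σ(r)^{(α-p+1)/α} ess sup_{r/σ<|x|<σr} b^{(p-1)/α})`. -/
def fdef {n : ℕ} (q b : Euc n → ℝ) (p α σ r : ℝ) : ℝ :=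
  qinf q σ r /
    (1 + r * qinf q σ r ^ ((α - p + 1) / α) *
      essSup (fun x => b x ^ ((p - 1) / α)) (volume.restrict (Ann n (r / σ) (σ * r))))

/-- local boundedness of the absolute value -/
def LB {n : ℕ} {F : Type*} [NormedAddCommGroup F] (f : Euc n → F) : Prop :=
  ∀ K : Set (Euc n), IsCompact K → ∃ C, ∀ x ∈ K, ‖f x‖ ≤ C

lemma LB.integrable_mul {n : ℕ} {F : Type*} [NormedAddCommGroup F]
    {f : Euc n → F} (hf : AEStronglyMeasurable f volume) (hb : LB f)
    {K : Set (Euc n)} (hK : IsCompact K) (h0 : ∀ x, x ∉ K → f x = 0) : Integrable f := by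
  obtain ⟨C, hC⟩ := hb K hK
  have : IntegrableOn f K := by
    refine Measure.integrableOn_of_bounded hK.measure_lt_top.ne hf (M := C) ?_
    exact (ae_restrict_iff' hK.measurableSet).2 (Eventually.of_forall hC)
  rwa [integrableOn_iff_integrable_of_support_subset] at this
  intro x hx
  by_contra h
  exact hx (h0 x h)

lemma grad_norm {n : ℕ} (u : Euc n → ℝ) (x : Euc n) : ‖gradient u x‖ = ‖fderiv ℝ u x‖ := by
  simp [gradient]

lemma inner_grad {n : ℕ} (u : Euc n → ℝ) (x v : Euc n) :
    ⟪v, gradient u x⟫ = fderiv ℝ u x v := by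
  rw [real_inner_comm]; simp [gradient]

lemma inner_grad' {n : ℕ} (u : Euc n → ℝ) (x v : Euc n) :
    ⟪gradient u x, v⟫ = fderiv ℝ u x v := by
  simp [gradient]

/-- extension of the weak inequality from smooth to `C¹` test functions -/
lemma weak_C1 {n : ℕ} {V : Euc n → Euc n} {c : Euc n → ℝ} (hV : Measurable V) (hVb : LB V)
    (hc : Measurable c) (hcb : LB c)
    (h : ∀ φ : Euc n → ℝ, ContDiff ℝ (⊤ : ℕ∞) φ → HasCompactSupport φ → (∀ x, 0 ≤ φ x) →
      0 ≤ ∫ x, (c x * φ x - fderiv ℝ φ x (V x)))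
    (ψ : Euc n → ℝ) (hψ : ContDiff ℝ 1 ψ) (hψc : HasCompactSupport ψ) (hψ0 : ∀ x, 0 ≤ ψ x) :
    0 ≤ ∫ x, (c x * ψ x - fderiv ℝ ψ x (V x)) := by
  let B : ℕ → ContDiffBump (0 : Euc n) := fun j =>
    ⟨1 / (2 * ((j:ℝ) + 1)), 1 / ((j:ℝ) + 1), by positivity, by
      have : (0:ℝ) ≤ j := by positivity
      apply one_div_lt_one_div_of_lt (by positivity)
      linarith⟩
  have hB1 : ∀ j, (B j).rOut ≤ 1 := by
    intro j
    show 1 / ((j:ℝ) + 1) ≤ 1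
    rw [div_le_one (by positivity)]
    have : (0:ℝ) ≤ j := by positivity
    linarith
  have hBt : Tendsto (fun j => (B j).rOut) atTop (nhds 0) := tendsto_one_div_add_atTop_nhds_zero_nat
  let Φ : ℕ → Euc n → ℝ := fun j =>
    convolution ((B j).normed volume) ψ (ContinuousLinearMap.lsmul ℝ ℝ) volume
  let D : ℕ → Euc n → (Euc n →L[ℝ] ℝ) := fun j =>
    convolution ((B j).normed volume) (fderiv ℝ ψ) (ContinuousLinearMap.lsmul ℝ ℝ) volume
  have hψ' : Continuous (fderiv ℝ ψ) := hψ.continuous_fderiv (by norm_num)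
  have hfd : ∀ j x, HasFDerivAt (Φ j) (D j x) x := by
    intro j x
    have := hψc.hasFDerivAt_convolution_right (μ := volume) (ContinuousLinearMap.lsmul ℝ ℝ)
      ((B j).integrable_normed (μ := volume)).locallyIntegrable hψ x
    have heq : convolution ((B j).normed volume) (fderiv ℝ ψ)
      (ContinuousLinearMap.precompR (Euc n) (ContinuousLinearMap.lsmul ℝ ℝ)) volume x = D j x := by
      show ∫ t, _ = ∫ t, _
      congr 1
    rw [heq] at this
    exact this
  have hfd' : ∀ j x, fderiv ℝ (Φ j) x = D j x := fun j x => (hfd j x).fderiv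
  have hsm : ∀ j, ContDiff ℝ (⊤ : ℕ∞) (Φ j) := by
    intro j
    exact (B j).hasCompactSupport_normed.contDiff_convolution_left _
      (B j).contDiff_normed hψ.continuous.locallyIntegrable
  have hcs : ∀ j, HasCompactSupport (Φ j) := fun j =>
    HasCompactSupport.convolution _ (B j).hasCompactSupport_normed hψc
  have hnn : ∀ j x, 0 ≤ Φ j x := by
    intro j x
    apply integral_nonneg
    intro t
    simp only [ContinuousLinearMap.lsmul_apply, smul_eq_mul]
    exact mul_nonneg ((B j).nonneg_normed _) (hψ0 _)
  have hpt : ∀ x, Tendsto (fun j => Φ j x) atTop (nhds (ψ x)) := fun x =>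
    ContDiffBump.convolution_tendsto_right_of_continuous hBt hψ.continuous x
  have hptD : ∀ x, Tendsto (fun j => D j x) atTop (nhds (fderiv ℝ ψ x)) := fun x =>
    ContDiffBump.convolution_tendsto_right_of_continuous hBt hψ' x
  obtain ⟨C0, hC0⟩ := hψc.exists_bound_of_continuous hψ.continuous
  obtain ⟨C1, hC1⟩ := (hψc.fderiv ℝ).exists_bound_of_continuous hψ'
  have hb0 : ∀ j x, ‖Φ j x‖ ≤ 3 * C0 := by
    intro j x
    have : dist (Φ j x) (ψ x) ≤ 2 * C0 := by
      apply ContDiffBump.dist_normed_convolution_le hψ.continuous.aestronglyMeasurable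
      intro y _
      rw [dist_eq_norm]
      have := norm_sub_le (ψ y) (ψ x)
      linarith [hC0 x, hC0 y]
    rw [dist_eq_norm] at this
    have h2 := norm_add_le (Φ j x - ψ x) (ψ x)
    rw [sub_add_cancel] at h2
    linarith [hC0 x]
  have hb1 : ∀ j x, ‖D j x‖ ≤ 3 * C1 := by
    intro j x
    have : dist (D j x) (fderiv ℝ ψ x) ≤ 2 * C1 := by
      apply ContDiffBump.dist_normed_convolution_le hψ'.aestronglyMeasurable
      intro y _
      rw [dist_eq_norm]
      have := norm_sub_le (fderiv ℝ ψ y) (fderiv ℝ ψ x)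
      linarith [hC1 x, hC1 y]
    rw [dist_eq_norm] at this
    have h2 := norm_add_le (D j x - fderiv ℝ ψ x) (fderiv ℝ ψ x)
    rw [sub_add_cancel] at h2
    linarith [hC1 x]
  set K : Set (Euc n) := cthickening 1 (tsupport ψ) with hKdef
  have hK : IsCompact K := hψc.isCompact.cthickening
  have hz0 : ∀ j x, x ∉ K → ∀ t ∈ ball (0 : Euc n) (B j).rOut, x - t ∉ tsupport ψ := by
    intro j x hx t ht hmem
    apply hx
    apply mem_cthickening_of_dist_le x (x - t) 1 _ hmem
    rw [dist_eq_norm]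
    simp only [sub_sub_cancel]
    rw [mem_ball_zero_iff] at ht
    linarith [hB1 j]
  have hzΦ : ∀ j x, x ∉ K → Φ j x = 0 := by
    intro j x hx
    show ∫ t, _ = _
    apply integral_eq_zero_of_ae
    refine Eventually.of_forall fun t => ?_
    by_cases ht : t ∈ ball (0 : Euc n) (B j).rOut
    · have := image_eq_zero_of_notMem_tsupport (hz0 j x hx t ht)
      simp [this]
    · have : (B j).normed volume t = 0 := by
        rw [← (B j).support_normed_eq (μ := volume)] at ht
        simpa using ht
      simp [this]
  have hzD : ∀ j x, x ∉ K → D j x = 0 := by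
    intro j x hx
    show ∫ t, _ = _
    apply integral_eq_zero_of_ae
    refine Eventually.of_forall fun t => ?_
    by_cases ht : t ∈ ball (0 : Euc n) (B j).rOut
    · have h1 := hz0 j x hx t ht
      have : fderiv ℝ ψ (x - t) = 0 := by
        by_contra hne
        exact h1 (support_fderiv_subset ℝ hne)
      simp [this]
    · have : (B j).normed volume t = 0 := by
        rw [← (B j).support_normed_eq (μ := volume)] at ht
        simpa using ht
      simp [this]
  obtain ⟨M1, hM1⟩ := hVb K hK
  obtain ⟨M2, hM2⟩ := hcb K hK
  have hlim : Tendsto (fun j => ∫ x, (c x * Φ j x - fderiv ℝ (Φ j) x (V x))) atTop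
      (nhds (∫ x, (c x * ψ x - fderiv ℝ ψ x (V x)))) := by
    apply tendsto_integral_of_dominated_convergence
      (K.indicator (fun _ => M2 * (3 * C0) + 3 * C1 * M1))
    · intro j
      have h1 : Measurable (Φ j) := (hsm j).continuous.measurable
      have h2 : Continuous (fderiv ℝ (Φ j)) := (hsm j).continuous_fderiv (by simp)
      have h3 : Measurable (fun x => fderiv ℝ (Φ j) x (V x)) := by
        have : Continuous (fun z : (Euc n →L[ℝ] ℝ) × Euc n => z.1 z.2) := by fun_prop
        exact this.measurable.comp (h2.measurable.prodMk hV)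
      exact ((hc.mul h1).sub h3).aestronglyMeasurable
    · rw [integrable_indicator_iff hK.measurableSet]
      exact integrableOn_const hK.measure_lt_top.ne
    · intro j
      refine Eventually.of_forall fun x => ?_
      by_cases hx : x ∈ K
      · rw [indicator_of_mem hx, hfd']
        refine (norm_sub_le _ _).trans (add_le_add ?_ ?_)
        · rw [norm_mul]
          exact mul_le_mul (hM2 x hx) (hb0 j x) (norm_nonneg _) ((norm_nonneg _).trans (hM2 x hx))
        · refine ((D j x).le_opNorm _).trans ?_
          exact mul_le_mul (hb1 j x) (hM1 x hx) (norm_nonneg _) ((norm_nonneg _).trans (hb1 j x))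
      · rw [indicator_of_notMem hx, hfd', hzΦ j x hx, hzD j x hx]
        simp
    · refine Eventually.of_forall fun x => ?_
      refine ((hpt x).const_mul _).sub ?_
      simp_rw [hfd']
      exact ((ContinuousLinearMap.apply ℝ ℝ (V x)).continuous.tendsto _).comp (hptD x)
  exact ge_of_tendsto' hlim (fun j => h _ (hsm j) (hcs j) (hnn j))


lemma gns (n : ℕ) (hn : 2 ≤ n) : ∃ K : ℝ, 0 < K ∧ ∀ F : Euc n → ℝ, ContDiff ℝ 1 F →
    HasCompactSupport F → (∀ x, 0 ≤ F x) →
    ∫ x, F x ^ ((n:ℝ) / (n - 1)) ≤ K * (∫ x, ‖fderiv ℝ F x‖) ^ ((n:ℝ) / (n - 1)) := by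
  have hn' : (2:ℝ) ≤ n := by exact_mod_cast hn
  set κ : ℝ := (n:ℝ) / (n - 1) with hκ
  have hκ0 : 0 < κ := div_pos (by linarith) (by linarith)
  have hconj : Real.HolderConjugate (Module.finrank ℝ (Euc n)) κ := by
    rw [finrank_euclideanSpace_fin, Real.holderConjugate_iff_eq_conjExponent (by linarith)]
  let C := lintegralPowLePowLIntegralFDerivConst (volume : Measure (Euc n)) κ
  refine ⟨(C : ℝ) + 1, by positivity, fun F hF hFc hF0 => ?_⟩
  have h := lintegral_pow_le_pow_lintegral_fderiv (volume : Measure (Euc n)) hF hFc hconj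
  have hF' : Continuous (fderiv ℝ F) := hF.continuous_fderiv (by norm_num)
  have hIntegr : Integrable (fun x => ‖fderiv ℝ F x‖) :=
    (hF'.integrable_of_hasCompactSupport (hFc.fderiv ℝ)).norm
  have h1 : ∫⁻ x, ‖fderiv ℝ F x‖ₑ = ENNReal.ofReal (∫ x, ‖fderiv ℝ F x‖) := by
    rw [ofReal_integral_eq_lintegral_ofReal hIntegr (Eventually.of_forall fun _ => norm_nonneg _)]
    simp_rw [ofReal_norm]
  have hI0 : 0 ≤ ∫ x, ‖fderiv ℝ F x‖ := integral_nonneg fun _ => norm_nonneg _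
  have h2 : ∫ x, F x ^ κ = (∫⁻ x, ‖F x‖ₑ ^ κ).toReal := by
    rw [integral_eq_lintegral_of_nonneg_ae]
    · congr 1
      apply lintegral_congr
      intro x
      rw [← ENNReal.ofReal_rpow_of_nonneg (hF0 x) hκ0.le, ← ofReal_norm,
        Real.norm_of_nonneg (hF0 x)]
    · exact Eventually.of_forall fun x => Real.rpow_nonneg (hF0 x) _
    · exact (hF.continuous.rpow_const (fun _ => Or.inr hκ0.le)).aestronglyMeasurable
  rw [h2]
  rw [h1, ENNReal.ofReal_rpow_of_nonneg hI0 hκ0.le] at h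
  have h3 := ENNReal.toReal_mono (by finiteness) h
  rw [ENNReal.toReal_mul, ENNReal.toReal_ofReal (by positivity)] at h3
  refine h3.trans ?_
  gcongr
  simp only [ENNReal.coe_toReal]
  linarith

lemma hasDerivAt_pospow {s : ℝ} (hs : 1 < s) (t : ℝ) :
    HasDerivAt (fun t : ℝ => max t 0 ^ s) (s * max t 0 ^ (s - 1)) t := by
  rcases lt_trichotomy t 0 with h | h | h
  · rw [max_eq_right h.le, Real.zero_rpow (by linarith), mul_zero]
    refine (hasDerivAt_const t (0:ℝ)).congr_of_eventuallyEq ?_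
    filter_upwards [Iio_mem_nhds h] with y hy
    rw [max_eq_right (le_of_lt hy), Real.zero_rpow (by linarith)]
  · subst h
    have h1 : HasDerivWithinAt (fun t : ℝ => max t 0 ^ s) (s * max 0 0 ^ (s - 1)) (Ici 0) 0 := by
      rw [max_self]
      refine ((Real.hasDerivAt_rpow_const (x := 0) (p := s) (Or.inr hs.le)).hasDerivWithinAt).congr
        ?_ ?_
      · intro y hy
        simp only [max_eq_left (mem_Ici.1 hy)]
      · simp
    have h2 : HasDerivWithinAt (fun t : ℝ => max t 0 ^ s) (s * max 0 0 ^ (s - 1)) (Iic 0) 0 := by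
      rw [max_self, Real.zero_rpow (by linarith), mul_zero]
      refine (hasDerivWithinAt_const (0:ℝ) (Iic 0) (0:ℝ)).congr ?_ ?_
      · intro y hy
        simp only [max_eq_right (mem_Iic.1 hy)]
        rw [Real.zero_rpow (by linarith)]
      · simp only [max_self]
        rw [Real.zero_rpow (by linarith)]
    have := h1.union h2
    rwa [Ici_union_Iic, hasDerivWithinAt_univ] at this
  · rw [max_eq_left h.le]
    refine (Real.hasDerivAt_rpow_const (Or.inr hs.le)).congr_of_eventuallyEq ?_
    filter_upwards [Ioi_mem_nhds h] with y hy
    rw [max_eq_left (le_of_lt hy)]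

lemma contDiff_pospow {s : ℝ} (hs : 1 < s) : ContDiff ℝ 1 (fun t : ℝ => max t 0 ^ s) := by
  rw [contDiff_one_iff_deriv]
  refine ⟨fun t => (hasDerivAt_pospow hs t).differentiableAt, ?_⟩
  have : deriv (fun t : ℝ => max t 0 ^ s) = fun t => s * max t 0 ^ (s - 1) :=
    funext fun t => (hasDerivAt_pospow hs t).deriv
  rw [this]
  refine continuous_const.mul ?_
  exact (continuous_id.max continuous_const).rpow_const (fun _ => Or.inr (by linarith))

/-- positive part -/
def pp {n : ℕ} (u : Euc n → ℝ) (k : ℝ) (x : Euc n) : ℝ := max (u x - k) 0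

lemma pp_nonneg {n : ℕ} (u : Euc n → ℝ) (k : ℝ) (x : Euc n) : 0 ≤ pp u k x := le_max_right _ _

lemma pp_cont {n : ℕ} {u : Euc n → ℝ} (hu : Continuous u) (k : ℝ) : Continuous (pp u k) :=
  (hu.sub continuous_const).max continuous_const

lemma pp_pow_cont {n : ℕ} {u : Euc n → ℝ} (hu : Continuous u) (k : ℝ) {s : ℝ} (hs : 0 ≤ s) :
    Continuous (fun x => pp u k x ^ s) :=
  (pp_cont hu k).rpow_const (fun _ => Or.inr hs)

lemma pp_pow_contDiff {n : ℕ} {u : Euc n → ℝ} (hu : ContDiff ℝ 1 u) (k : ℝ) {s : ℝ} (hs : 1 < s) :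
    ContDiff ℝ 1 (fun x => pp u k x ^ s) :=
  (contDiff_pospow hs).comp (hu.sub contDiff_const)

lemma pp_pow_fderiv {n : ℕ} {u : Euc n → ℝ} (hu : ContDiff ℝ 1 u) (k : ℝ) {s : ℝ} (hs : 1 < s)
    {χ : Euc n → ℝ} (hχ : ContDiff ℝ 1 χ) (x : Euc n) :
    HasFDerivAt (fun x => pp u k x ^ s * χ x)
      ((s * pp u k x ^ (s - 1) * χ x) • fderiv ℝ u x + pp u k x ^ s • fderiv ℝ χ x) x := by
  have h1 : HasFDerivAt u (fderiv ℝ u x) x := (hu.differentiable (by norm_num) x).hasFDerivAt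
  have h2 : HasFDerivAt χ (fderiv ℝ χ x) x := (hχ.differentiable (by norm_num) x).hasFDerivAt
  have h3 : HasFDerivAt (fun x => pp u k x ^ s) ((s * pp u k x ^ (s - 1)) • fderiv ℝ u x) x := by
    have := HasDerivAt.comp_hasFDerivAt (h₂ := fun t : ℝ => max t 0 ^ s) x
      (hasDerivAt_pospow hs (u x - k)) (h1.sub_const k)
    exact this
  have hm := h3.mul h2
  have e : (s * pp u k x ^ (s - 1) * χ x) • fderiv ℝ u x + pp u k x ^ s • fderiv ℝ χ x =
    pp u k x ^ s • fderiv ℝ χ x + χ x • (s * pp u k x ^ (s - 1)) • fderiv ℝ u x := by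
    rw [smul_smul, add_comm, mul_comm (χ x)]
  rw [e]
  exact hm

/-- the hypotheses in a convenient packaged form -/
structure Sol {n : ℕ} (A : Euc n → Euc n → Euc n) (p C₁ C₂ α : ℝ) (b q : Euc n → ℝ) (g : ℝ → ℝ)
    (u : Euc n → ℝ) : Prop where
  hp : 1 < p
  hC₁ : 0 < C₁
  hC₂ : 0 < C₂
  hα₁ : p - 1 ≤ α
  hα₂ : α ≤ p
  hA : StructCond A p C₁ C₂
  hbm : Measurable b
  hb0 : ∀ x, 0 ≤ b x
  hbL : LocBdd b
  hqm : Measurable q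
  hq0 : ∀ x, 0 ≤ q x
  hqL : LocBdd q
  hg : ContinuousOn g (Set.Ici 0)
  hg0 : ∀ t ∈ Set.Ici (0 : ℝ), 0 ≤ g t
  hgp : ∀ t : ℝ, 0 < t → 0 < g t
  hu : ContDiff ℝ 1 u
  hu0 : ∀ x, 0 ≤ u x
  hw : IsWeakSol A b α (fun x => q x * g (u x)) Set.univ u

lemma LB.mul {n : ℕ} {f h : Euc n → ℝ} (hf : LB f) (hh : LB h) : LB (fun x => f x * h x) := by
  intro K hK
  obtain ⟨C, hC⟩ := hf K hK
  obtain ⟨D, hD⟩ := hh K hK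
  refine ⟨C * D, fun x hx => ?_⟩
  rw [norm_mul]
  exact mul_le_mul (hC x hx) (hD x hx) (norm_nonneg _) ((norm_nonneg _).trans (hC x hx))

lemma LB.sub {n : ℕ} {f h : Euc n → ℝ} (hf : LB f) (hh : LB h) : LB (fun x => f x - h x) := by
  intro K hK
  obtain ⟨C, hC⟩ := hf K hK
  obtain ⟨D, hD⟩ := hh K hK
  exact ⟨C + D, fun x hx => (norm_sub_le _ _).trans (add_le_add (hC x hx) (hD x hx))⟩

lemma LB.of_cont {n : ℕ} {F : Type*} [NormedAddCommGroup F] {f : Euc n → F} (hf : Continuous f) :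
    LB f := fun _ hK => hK.exists_bound_of_continuousOn hf.continuousOn

lemma LB.of_LocBdd {n : ℕ} {f : Euc n → ℝ} (hf : LocBdd f) (h0 : ∀ x, 0 ≤ f x) : LB f := by
  intro K hK
  obtain ⟨C, hC⟩ := hf K hK
  refine ⟨C, fun x hx => ?_⟩
  rw [Real.norm_of_nonneg (h0 x)]
  exact hC x hx

namespace Sol
variable {n : ℕ} {A : Euc n → Euc n → Euc n} {p C₁ C₂ α : ℝ} {b q : Euc n → ℝ} {g : ℝ → ℝ}
    {u : Euc n → ℝ}

lemma α_pos (h : Sol A p C₁ C₂ α b q g u) : 0 < α := by linarith [h.hp, h.hα₁]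

lemma fd_cont (h : Sol A p C₁ C₂ α b q g u) : Continuous (fderiv ℝ u) :=
  h.hu.continuous_fderiv (by norm_num)

lemma grad_cont (h : Sol A p C₁ C₂ α b q g u) : Continuous (gradient u) :=
  (InnerProductSpace.toDual ℝ (Euc n)).symm.continuous.comp h.fd_cont

lemma nf_cont (h : Sol A p C₁ C₂ α b q g u) {e : ℝ} (he : 0 ≤ e) :
    Continuous (fun x => ‖fderiv ℝ u x‖ ^ e) :=
  (h.fd_cont.norm).rpow_const (fun _ => Or.inr he)

lemma gu_cont (h : Sol A p C₁ C₂ α b q g u) : Continuous (fun x => g (u x)) :=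
  h.hg.comp_continuous h.hu.continuous h.hu0

lemma V_meas (h : Sol A p C₁ C₂ α b q g u) : Measurable (fun x => A x (gradient u x)) :=
  h.hA.1.comp (measurable_id.prodMk h.grad_cont.measurable)

lemma V_bd (h : Sol A p C₁ C₂ α b q g u) (x : Euc n) :
    ‖A x (gradient u x)‖ ≤ C₂ * ‖fderiv ℝ u x‖ ^ (p - 1) := by
  rw [← grad_norm]; exact (h.hA.2 x _).2

lemma V_LB (h : Sol A p C₁ C₂ α b q g u) : LB (fun x => A x (gradient u x)) := by
  intro K hK
  obtain ⟨C, hC⟩ := LB.of_cont (h.nf_cont (e := p - 1) (by linarith [h.hp])) K hK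
  refine ⟨C₂ * C, fun x hx => (h.V_bd x).trans ?_⟩
  have := (le_abs_self _).trans (hC x hx)
  have := h.hC₂
  gcongr

lemma bt_meas (h : Sol A p C₁ C₂ α b q g u) :
    Measurable (fun x => b x * ‖fderiv ℝ u x‖ ^ α) :=
  h.hbm.mul (h.nf_cont h.α_pos.le).measurable

lemma bt_LB (h : Sol A p C₁ C₂ α b q g u) : LB (fun x => b x * ‖fderiv ℝ u x‖ ^ α) :=
  (LB.of_LocBdd h.hbL h.hb0).mul (LB.of_cont (h.nf_cont h.α_pos.le))

lemma qg_meas (h : Sol A p C₁ C₂ α b q g u) : Measurable (fun x => q x * g (u x)) :=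
  h.hqm.mul h.gu_cont.measurable

lemma qg_LB (h : Sol A p C₁ C₂ α b q g u) : LB (fun x => q x * g (u x)) :=
  (LB.of_LocBdd h.hqL h.hq0).mul (LB.of_cont h.gu_cont)

lemma V_app_meas (h : Sol A p C₁ C₂ α b q g u) {ψ : Euc n → ℝ} (hψ : ContDiff ℝ 1 ψ) :
    Measurable (fun x => fderiv ℝ ψ x (A x (gradient u x))) := by
  have h2 : Continuous (fderiv ℝ ψ) := hψ.continuous_fderiv (by norm_num)
  have : Continuous (fun z : (Euc n →L[ℝ] ℝ) × Euc n => z.1 z.2) := by fun_prop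
  exact this.measurable.comp (h2.measurable.prodMk h.V_meas)

lemma V_app_LB (h : Sol A p C₁ C₂ α b q g u) {ψ : Euc n → ℝ} (hψ : ContDiff ℝ 1 ψ) :
    LB (fun x => fderiv ℝ ψ x (A x (gradient u x))) := by
  have h2 : Continuous (fderiv ℝ ψ) := hψ.continuous_fderiv (by norm_num)
  intro K hK
  obtain ⟨C, hC⟩ := LB.of_cont h2 K hK
  obtain ⟨D, hD⟩ := h.V_LB K hK
  refine ⟨C * D, fun x hx => ((fderiv ℝ ψ x).le_opNorm _).trans ?_⟩
  exact mul_le_mul (hC x hx) (hD x hx) (norm_nonneg _) ((norm_nonneg _).trans (hC x hx))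

lemma fderiv_zero {ψ : Euc n → ℝ} {x : Euc n} (hx : x ∉ tsupport ψ) : fderiv ℝ ψ x = 0 := by
  by_contra hne
  exact hx (support_fderiv_subset ℝ hne)

lemma int_all (h : Sol A p C₁ C₂ α b q g u) {ψ : Euc n → ℝ} (hψ : ContDiff ℝ 1 ψ)
    (hψc : HasCompactSupport ψ) :
    Integrable (fun x => b x * ‖fderiv ℝ u x‖ ^ α * ψ x) ∧
    Integrable (fun x => q x * g (u x) * ψ x) ∧
    Integrable (fun x => fderiv ℝ ψ x (A x (gradient u x))) := by
  refine ⟨?_, ?_, ?_⟩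
  · refine LB.integrable_mul (h.bt_meas.mul hψ.continuous.measurable).aestronglyMeasurable
      (h.bt_LB.mul (LB.of_cont hψ.continuous)) hψc.isCompact ?_
    intro x hx
    simp [image_eq_zero_of_notMem_tsupport hx]
  · refine LB.integrable_mul (h.qg_meas.mul hψ.continuous.measurable).aestronglyMeasurable
      (h.qg_LB.mul (LB.of_cont hψ.continuous)) hψc.isCompact ?_
    intro x hx
    simp [image_eq_zero_of_notMem_tsupport hx]
  · refine LB.integrable_mul (h.V_app_meas hψ).aestronglyMeasurable
      (h.V_app_LB hψ) hψc.isCompact ?_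
    intro x hx
    simp [fderiv_zero hx]

lemma C1_test (h : Sol A p C₁ C₂ α b q g u) {ψ : Euc n → ℝ} (hψ : ContDiff ℝ 1 ψ)
    (hψc : HasCompactSupport ψ) (hψ0 : ∀ x, 0 ≤ ψ x) :
    0 ≤ ∫ x, ((b x * ‖fderiv ℝ u x‖ ^ α - q x * g (u x)) * ψ x
      - fderiv ℝ ψ x (A x (gradient u x))) := by
  refine weak_C1 h.V_meas h.V_LB (h.bt_meas.sub h.qg_meas) (h.bt_LB.sub h.qg_LB) ?_ ψ hψ hψc hψ0
  intro φ hφ hφc hφ0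
  have hφ1 : ContDiff ℝ 1 φ := hφ.of_le (by exact_mod_cast le_top)
  obtain ⟨i1, i2, i3⟩ := h.int_all hφ1 hφc
  have := h.hw φ hφ hφc (subset_univ _) hφ0
  simp only [Measure.restrict_univ, inner_grad, grad_norm] at this
  have e1 : ∫ x, ((b x * ‖fderiv ℝ u x‖ ^ α - q x * g (u x)) * φ x
      - fderiv ℝ φ x (A x (gradient u x))) = (∫ x, b x * ‖fderiv ℝ u x‖ ^ α * φ x)
      - (∫ x, q x * g (u x) * φ x) - ∫ x, fderiv ℝ φ x (A x (gradient u x)) := by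
    simp only [sub_mul]
    exact (integral_sub (i1.sub i2) i3).trans (by rw [← integral_sub i1 i2]; rfl)
  refine le_of_le_of_eq ?_ e1.symm
  linarith

/-- tested inequality -/
lemma tested (h : Sol A p C₁ C₂ α b q g u) (k : ℝ) {s : ℝ} (hs : 1 < s)
    {χ : Euc n → ℝ} (hχ : ContDiff ℝ 1 χ) (hχc : HasCompactSupport χ) (hχ0 : ∀ x, 0 ≤ χ x)
    {H : Euc n → ℝ} (hH : Integrable H)
    (hle : ∀ᵐ x, (b x * ‖fderiv ℝ u x‖ ^ α - q x * g (u x)) * (pp u k x ^ s * χ x)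
      - s * C₁ * (‖fderiv ℝ u x‖ ^ p * pp u k x ^ (s - 1) * χ x)
      + C₂ * (‖fderiv ℝ u x‖ ^ (p - 1) * pp u k x ^ s * ‖fderiv ℝ χ x‖) ≤ H x) :
    0 ≤ ∫ x, H x := by
  set ψ : Euc n → ℝ := fun x => pp u k x ^ s * χ x with hψdef
  have hψ : ContDiff ℝ 1 ψ := (pp_pow_contDiff h.hu k hs).mul hχ
  have hψc : HasCompactSupport ψ := hχc.mul_left
  have hψ0 : ∀ x, 0 ≤ ψ x := fun x =>
    mul_nonneg (Real.rpow_nonneg (pp_nonneg _ _ _) _) (hχ0 x)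
  refine (h.C1_test hψ hψc hψ0).trans ?_
  obtain ⟨i1, i2, i3⟩ := h.int_all hψ hψc
  refine integral_mono_ae ?_ hH ?_
  · have := (i1.sub i2).sub i3
    refine this.congr (Eventually.of_forall fun x => ?_)
    simp only [Pi.sub_apply]
    ring
  · filter_upwards [hle] with x hx
    refine le_trans ?_ hx
    have hfd : fderiv ℝ ψ x = _ := (pp_pow_fderiv h.hu k hs hχ x).fderiv
    rw [hfd]
    simp only [add_apply, smul_apply, smul_eq_mul]
    have h1 : C₁ * ‖fderiv ℝ u x‖ ^ p ≤ fderiv ℝ u x (A x (gradient u x)) := by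
      rw [← inner_grad', ← grad_norm]; exact (h.hA.2 x _).1
    have h2 : -(fderiv ℝ χ x (A x (gradient u x))) ≤
        ‖fderiv ℝ χ x‖ * (C₂ * ‖fderiv ℝ u x‖ ^ (p - 1)) := by
      refine (neg_le_abs _).trans (((fderiv ℝ χ x).le_opNorm _).trans ?_)
      exact mul_le_mul_of_nonneg_left (h.V_bd x) (norm_nonneg _)
    have h3 : 0 ≤ s * pp u k x ^ (s - 1) * χ x :=
      mul_nonneg (mul_nonneg (by linarith) (Real.rpow_nonneg (pp_nonneg _ _ _) _)) (hχ0 x)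
    have h4 : 0 ≤ pp u k x ^ s := Real.rpow_nonneg (pp_nonneg _ _ _) _
    have h5 := mul_le_mul_of_nonneg_left h1 h3
    have h6 := mul_le_mul_of_nonneg_left h2 h4
    simp only [hψdef]
    nlinarith [h5, h6]

end Sol


lemma young1 {p ε X Y : ℝ} (hp : 1 < p) (hε : 0 < ε) (hX : 0 ≤ X) (hY : 0 ≤ Y) :
    X ^ (p - 1) * Y ≤ ε * X ^ p + (1 / ε) ^ (p - 1) * Y ^ p := by
  have e1 : ∀ Z : ℝ, 0 ≤ Z → Z ^ p = Z ^ (p - 1) * Z := by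
    intro Z hZ
    rw [← Real.rpow_add_one' hZ (by linarith)]; congr 1; ring
  have hXp : 0 ≤ X ^ p := by positivity
  have hYp : 0 ≤ Y ^ p := by positivity
  rcases le_total Y (ε * X) with h | h
  · have : X ^ (p - 1) * Y ≤ ε * X ^ p := by
      rw [e1 X hX]
      calc X ^ (p - 1) * Y ≤ X ^ (p - 1) * (ε * X) := by gcongr
        _ = _ := by ring
    have : 0 ≤ (1 / ε) ^ (p - 1) * Y ^ p := by positivity
    linarith
  · have h2 : X ≤ 1 / ε * Y := by
      rw [one_div, inv_mul_eq_div, le_div_iff₀ hε]; linarith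
    have : X ^ (p - 1) * Y ≤ (1 / ε) ^ (p - 1) * Y ^ p := by
      rw [e1 Y hY, ← mul_assoc, ← Real.mul_rpow (by positivity) hY]
      gcongr
    have : 0 ≤ ε * X ^ p := by positivity
    linarith

lemma int_comb {n : ℕ} {f₁ f₂ f₃ : Euc n → ℝ} {μ : Measure (Euc n)} (i1 : Integrable f₁ μ)
    (i2 : Integrable f₂ μ) (i3 : Integrable f₃ μ) (a b c : ℝ) :
    ∫ x, (a * f₁ x - b * f₂ x + c * f₃ x) ∂μ =
      a * (∫ x, f₁ x ∂μ) - b * (∫ x, f₂ x ∂μ) + c * (∫ x, f₃ x ∂μ) := by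
  have e1 := integral_add (μ := μ) ((i1.const_mul a).sub (i2.const_mul b)) (i3.const_mul c)
  have e2 := integral_sub (μ := μ) (i1.const_mul a) (i2.const_mul b)
  simp only [Pi.sub_apply] at e1
  rw [e1, e2, integral_const_mul, integral_const_mul, integral_const_mul]

lemma cutoff (n : ℕ) : ∃ L : ℝ, 0 < L ∧ ∀ (x₀ : Euc n) (r : ℝ), 0 < r →
    ∃ η : Euc n → ℝ, ContDiff ℝ 1 η ∧ (∀ x, 0 ≤ η x) ∧ (∀ x, η x ≤ 1) ∧ HasCompactSupport η ∧
      tsupport η ⊆ ball x₀ r ∧ (∀ x ∈ ball x₀ (r / 2), η x = 1) ∧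
      (∀ x, ‖fderiv ℝ η x‖ ≤ L / r) := by
  let B : ContDiffBump (0 : Euc n) := ⟨1 / 2, 3 / 4, by norm_num, by norm_num⟩
  have hB : ContDiff ℝ 1 B := B.contDiff
  obtain ⟨C, hC⟩ := (B.hasCompactSupport.fderiv ℝ).exists_bound_of_continuous
    (hB.continuous_fderiv (by norm_num))
  refine ⟨|C| + 1, by positivity, fun x₀ r hr => ?_⟩
  refine ⟨fun x => B (r⁻¹ • (x - x₀)), ?_, fun x => B.nonneg, fun x => B.le_one, ?_⟩
  · exact hB.comp ((contDiff_id.sub contDiff_const).const_smul _)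
  have hsub : tsupport (fun x => B (r⁻¹ • (x - x₀))) ⊆ closedBall x₀ (3 / 4 * r) := by
    apply closure_minimal _ isClosed_closedBall
    intro x hx
    have : r⁻¹ • (x - x₀) ∈ Function.support B := hx
    rw [B.support_eq, mem_ball_zero_iff, norm_smul, norm_inv, Real.norm_of_nonneg hr.le,
      inv_mul_lt_iff₀ hr] at this
    rw [mem_closedBall, dist_eq_norm]
    have h34 : B.rOut = 3 / 4 := rfl
    rw [h34] at this
    linarith
  refine ⟨?_, ?_, ?_, ?_⟩
  · exact HasCompactSupport.intro (isCompact_closedBall x₀ (3 / 4 * r)) (fun x hx => by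
      by_contra h
      exact hx (hsub (subset_tsupport _ h)))
  · refine hsub.trans (closedBall_subset_ball (by linarith))
  · intro x hx
    apply B.one_of_mem_closedBall
    rw [mem_closedBall_zero_iff, norm_smul, norm_inv, Real.norm_of_nonneg hr.le,
      inv_mul_le_iff₀ hr]
    rw [mem_ball, dist_eq_norm] at hx
    have h34 : B.rIn = 1 / 2 := rfl
    rw [h34]
    linarith
  · intro x
    have h1 : HasFDerivAt (fun x : Euc n => r⁻¹ • (x - x₀)) (r⁻¹ • ContinuousLinearMap.id ℝ (Euc n)) x :=
      ((hasFDerivAt_id x).sub_const x₀).const_smul r⁻¹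
    have h2 : HasFDerivAt B (fderiv ℝ B (r⁻¹ • (x - x₀))) (r⁻¹ • (x - x₀)) :=
      (hB.differentiable (by norm_num) _).hasFDerivAt
    have h3 := h2.comp x h1
    have h4 : fderiv ℝ (fun x => B (r⁻¹ • (x - x₀))) x = _ := h3.fderiv
    rw [h4]
    refine (ContinuousLinearMap.opNorm_comp_le _ _).trans ?_
    rw [norm_smul, norm_inv, Real.norm_of_nonneg hr.le, div_eq_mul_inv]
    have h5 : ‖ContinuousLinearMap.id ℝ (Euc n)‖ ≤ 1 := ContinuousLinearMap.norm_id_le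
    have h6 := hC (r⁻¹ • (x - x₀))
    have h7 := le_abs_self C
    calc _ ≤ (|C| + 1) * (r⁻¹ * 1) := by gcongr; linarith
      _ = _ := by ring

/-- local hypotheses on a ball -/
structure Loc {n : ℕ} (C₁ p α : ℝ) (b q : Euc n → ℝ) (g : ℝ → ℝ) (u : Euc n → ℝ)
    (k a β m : ℝ) (x₀ : Euc n) (R : ℝ) : Prop where
  ha : 0 < a
  hq : ∀ᵐ x, x ∈ ball x₀ R → k < u x → a ≤ q x * g (u x)
  hb : ∀ᵐ x, x ∈ ball x₀ R → b x ≤ β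
  hm : ∀ x ∈ ball x₀ R, u x ≤ k + m
  hm0 : 0 ≤ m
  hβ : ∀ D w : ℝ, 0 ≤ D → 0 ≤ w → w ≤ m → β * D ^ α * w ≤ a / 2 * w + C₁ / 4 * D ^ p

lemma Loc.mono {n : ℕ} {C₁ p α : ℝ} {b q : Euc n → ℝ} {g : ℝ → ℝ} {u : Euc n → ℝ}
    {k a β m : ℝ} {x₀ : Euc n} {R : ℝ} (h : Loc C₁ p α b q g u k a β m x₀ R) {r : ℝ} (hr : r ≤ R) :
    Loc C₁ p α b q g u k a β m x₀ r where
  ha := h.ha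
  hq := by filter_upwards [h.hq] with x hx h1 using hx (ball_subset_ball hr h1)
  hb := by filter_upwards [h.hb] with x hx h1 using hx (ball_subset_ball hr h1)
  hm := fun x hx => h.hm x (ball_subset_ball hr hx)
  hm0 := h.hm0
  hβ := h.hβ

/-- the constant in the Caccioppoli inequality -/
def Kc (p C₁ C₂ : ℝ) : ℝ := C₂ * p * (1 / (C₁ / (2 * C₂ * p))) ^ (p - 1)

lemma cacc_pt {p C₁ C₂ α s a β Q bb D w e E : ℝ} (hp : 1 < p) (hC₁ : 0 < C₁) (hC₂ : 0 < C₂)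
    (hs : 1 < s) (hD : 0 ≤ D) (hw : 0 < w) (he : 0 ≤ e) (hE : 0 ≤ E)
    (hQ : a ≤ Q) (hb : bb ≤ β)
    (hβ : β * D ^ α * w ≤ a / 2 * w + C₁ / 4 * D ^ p) :
    (bb * D ^ α - Q) * (w ^ s * e ^ p) - s * C₁ * (D ^ p * w ^ (s - 1) * e ^ p)
      + C₂ * (D ^ (p - 1) * w ^ s * (p * e ^ (p - 1) * E)) ≤
    -(a / 2) * (w ^ s * e ^ p) - C₁ / 4 * (D ^ p * w ^ (s - 1) * e ^ p)
      + Kc p C₁ C₂ * (w ^ (s + p - 1) * E ^ p) := by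
  have ews : w ^ s = w ^ (s - 1) * w := by
    rw [← Real.rpow_add_one' hw.le (by linarith)]; congr 1; ring
  have ewp : w ^ (s + p - 1) = w ^ (s - 1) * w ^ p := by
    rw [← Real.rpow_add hw]; congr 1; ring
  have hy := young1 (p := p) (ε := C₁ / (2 * C₂ * p)) (X := D * e) (Y := w * E) hp (by positivity)
    (by positivity) (by positivity)
  rw [Real.mul_rpow hD he, Real.mul_rpow hD he, Real.mul_rpow hw.le hE] at hy
  have h1 : C₂ * (D ^ (p - 1) * w ^ s * (p * e ^ (p - 1) * E)) ≤
      C₁ / 2 * (D ^ p * w ^ (s - 1) * e ^ p) + Kc p C₁ C₂ * (w ^ (s + p - 1) * E ^ p) := by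
    have h2 := mul_le_mul_of_nonneg_left hy (by positivity : 0 ≤ C₂ * p * w ^ (s - 1))
    rw [ews, ewp, Kc]
    calc _ = C₂ * p * w ^ (s - 1) * (D ^ (p - 1) * e ^ (p - 1) * (w * E)) := by ring
      _ ≤ _ := h2
      _ = _ := by field_simp
  have h3 : bb * D ^ α * (w ^ s * e ^ p) ≤ a / 2 * (w ^ s * e ^ p) +
      C₁ / 4 * (D ^ p * w ^ (s - 1) * e ^ p) := by
    have h4 : bb * D ^ α * w ≤ β * D ^ α * w := by gcongr
    have h5 := mul_le_mul_of_nonneg_left (h4.trans hβ) (by positivity : 0 ≤ w ^ (s - 1) * e ^ p)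
    rw [ews]
    calc _ = w ^ (s - 1) * e ^ p * (bb * D ^ α * w) := by ring
      _ ≤ _ := h5
      _ = _ := by ring
  have h6 : a * (w ^ s * e ^ p) ≤ Q * (w ^ s * e ^ p) := by gcongr
  have h7 : 1 * C₁ * (D ^ p * w ^ (s - 1) * e ^ p) ≤ s * C₁ * (D ^ p * w ^ (s - 1) * e ^ p) := by
    gcongr
  linarith

namespace Sol
variable {n : ℕ} {A : Euc n → Euc n → Euc n} {p C₁ C₂ α : ℝ} {b q : Euc n → ℝ} {g : ℝ → ℝ}
    {u : Euc n → ℝ}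

lemma cacc (h : Sol A p C₁ C₂ α b q g u) {k a β m : ℝ} {x₀ : Euc n} {R : ℝ}
    (hl : Loc C₁ p α b q g u k a β m x₀ R) {s : ℝ} (hs : 1 < s)
    {e : Euc n → ℝ} (he : ContDiff ℝ 1 e) (hec : HasCompactSupport e) (he0 : ∀ x, 0 ≤ e x)
    (heR : tsupport e ⊆ ball x₀ R) :
    a / 2 * (∫ x, pp u k x ^ s * e x ^ p) +
      C₁ / 4 * (∫ x, ‖fderiv ℝ u x‖ ^ p * pp u k x ^ (s - 1) * e x ^ p) ≤
    Kc p C₁ C₂ * ∫ x, pp u k x ^ (s + p - 1) * ‖fderiv ℝ e x‖ ^ p := by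
  have hp := h.hp
  have hep : ContDiff ℝ 1 (fun x => e x ^ p) := by
    have := pp_pow_contDiff he 0 hp
    have e2 : (fun x => e x ^ p) = fun x => pp e 0 x ^ p := by
      funext x
      simp [pp, max_eq_left (he0 x)]
    rw [e2]; exact this
  have hfe : ∀ x, ‖fderiv ℝ (fun x => e x ^ p) x‖ = p * e x ^ (p - 1) * ‖fderiv ℝ e x‖ := by
    intro x
    have := ((he.differentiable (by norm_num) x).hasFDerivAt.rpow_const (p := p) (Or.inr hp.le)).fderiv
    rw [this, norm_smul, Real.norm_of_nonneg]
    have := Real.rpow_nonneg (he0 x) (p - 1)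
    positivity
  have hepc : HasCompactSupport (fun x => e x ^ p) := by
    refine HasCompactSupport.intro hec.isCompact fun x hx => ?_
    rw [image_eq_zero_of_notMem_tsupport hx, Real.zero_rpow (by linarith)]
  have c1 : Continuous (fun x => pp u k x ^ s * e x ^ p) :=
    (pp_pow_cont h.hu.continuous k (by linarith)).mul hep.continuous
  have c2 : Continuous (fun x => ‖fderiv ℝ u x‖ ^ p * pp u k x ^ (s - 1) * e x ^ p) :=
    ((h.nf_cont (by linarith)).mul (pp_pow_cont h.hu.continuous k (by linarith))).mul hep.continuous
  have c3 : Continuous (fun x => pp u k x ^ (s + p - 1) * ‖fderiv ℝ e x‖ ^ p) := by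
    refine (pp_pow_cont h.hu.continuous k (by linarith)).mul ?_
    exact ((he.continuous_fderiv (by norm_num)).norm).rpow_const (fun _ => Or.inr (by linarith))
  have i1 := c1.integrable_of_hasCompactSupport (μ := volume) hepc.mul_left
  have i2 := c2.integrable_of_hasCompactSupport (μ := volume) hepc.mul_left
  have i3 := c3.integrable_of_hasCompactSupport (μ := volume) (by
    refine HasCompactSupport.intro hec.isCompact fun x hx => ?_
    rw [fderiv_zero hx, norm_zero, Real.zero_rpow (by linarith), mul_zero])
  have key := h.tested k hs hep hepc (fun x => Real.rpow_nonneg (he0 x) p)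
    (H := fun x => -(a / 2) * (pp u k x ^ s * e x ^ p)
      - C₁ / 4 * (‖fderiv ℝ u x‖ ^ p * pp u k x ^ (s - 1) * e x ^ p)
      + Kc p C₁ C₂ * (pp u k x ^ (s + p - 1) * ‖fderiv ℝ e x‖ ^ p))
    (((i1.const_mul _).sub (i2.const_mul _)).add (i3.const_mul _)) ?_
  · rw [int_comb i1 i2 i3] at key
    linarith
  · filter_upwards [hl.hq, hl.hb] with x hx1 hx2
    rw [hfe]
    by_cases hxR : x ∈ tsupport e
    · have hxB := heR hxR
      rcases (pp_nonneg u k x).eq_or_lt with hw | hw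
      · rw [← hw, Real.zero_rpow (by linarith : s ≠ 0), Real.zero_rpow (by linarith : s - 1 ≠ 0),
          Real.zero_rpow (by linarith : s + p - 1 ≠ 0)]
        simp
      · have hku : k < u x := by
          by_contra hcon
          rw [pp, max_eq_right (by linarith)] at hw
          exact lt_irrefl _ hw
        have hwm : pp u k x ≤ m := by
          rw [pp, max_eq_left (by linarith)]
          linarith [hl.hm x hxB]
        exact cacc_pt hp h.hC₁ h.hC₂ hs (norm_nonneg _) hw (he0 x) (norm_nonneg _)
          (hx1 hxB hku) (hx2 hxB) (hl.hβ _ _ (norm_nonneg _) hw.le hwm)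
    · rw [image_eq_zero_of_notMem_tsupport hxR, fderiv_zero hxR, norm_zero,
        Real.zero_rpow (by linarith : p ≠ 0)]
      simp

end Sol


lemma Kc_pos {p C₁ C₂ : ℝ} (hp : 1 < p) (hC₁ : 0 < C₁) (hC₂ : 0 < C₂) : 0 < Kc p C₁ C₂ := by
  unfold Kc; positivity

lemma cont_intOn_ball {n : ℕ} {f : Euc n → ℝ} (hf : Continuous f) (x₀ : Euc n) (r : ℝ) :
    IntegrableOn f (ball x₀ r) :=
  (hf.continuousOn.integrableOn_compact (isCompact_closedBall x₀ r)).mono_set ball_subset_closedBall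

namespace Sol
variable {n : ℕ} {A : Euc n → Euc n → Euc n} {p C₁ C₂ α : ℝ} {b q : Euc n → ℝ} {g : ℝ → ℝ}
    {u : Euc n → ℝ}

lemma cacc_ball (h : Sol A p C₁ C₂ α b q g u) {k a β m : ℝ} {x₀ : Euc n} {R : ℝ}
    (hl : Loc C₁ p α b q g u k a β m x₀ R) {s : ℝ} (hs : 1 < s)
    {e : Euc n → ℝ} (he : ContDiff ℝ 1 e) (hec : HasCompactSupport e) (he0 : ∀ x, 0 ≤ e x)
    (heR : tsupport e ⊆ ball x₀ R) {l : ℝ} (hL : ∀ x, ‖fderiv ℝ e x‖ ≤ l) :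
    a / 2 * (∫ x, pp u k x ^ s * e x ^ p) +
      C₁ / 4 * (∫ x, ‖fderiv ℝ u x‖ ^ p * pp u k x ^ (s - 1) * e x ^ p) ≤
    Kc p C₁ C₂ * (l ^ p * ∫ x in ball x₀ R, pp u k x ^ (s + p - 1)) := by
  refine (h.cacc hl hs he hec he0 heR).trans ?_
  have := Kc_pos h.hp h.hC₁ h.hC₂
  have hp := h.hp
  gcongr
  rw [← setIntegral_eq_integral_of_forall_compl_eq_zero (s := ball x₀ R), ← integral_const_mul]
  · have c3 : Continuous (fun x => pp u k x ^ (s + p - 1)) :=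
      (pp_pow_cont h.hu.continuous k (by linarith))
    have c4 : Continuous (fun x => ‖fderiv ℝ e x‖ ^ p) :=
      ((he.continuous_fderiv (by norm_num)).norm).rpow_const (fun _ => Or.inr (by linarith))
    refine setIntegral_mono (cont_intOn_ball (c3.mul c4) _ _)
      ((cont_intOn_ball c3 _ _).const_mul _) fun x => ?_
    have h1 : ‖fderiv ℝ e x‖ ^ p ≤ l ^ p := by
      have := hL x
      gcongr
    have h2 : 0 ≤ pp u k x ^ (s + p - 1) := Real.rpow_nonneg (pp_nonneg _ _ _) _
    simp only
    nlinarith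
  · intro x hx
    rw [fderiv_zero (fun hh => hx (heR hh)), norm_zero, Real.zero_rpow (by linarith), mul_zero]

end Sol

lemma ball_a (n : ℕ) {p C₁ C₂ : ℝ} (hp : 1 < p) (hC₁ : 0 < C₁) (hC₂ : 0 < C₂) :
    ∃ K : ℝ, 0 < K ∧ ∀ (A : Euc n → Euc n → Euc n) (α : ℝ) (b q : Euc n → ℝ) (g : ℝ → ℝ)
    (u : Euc n → ℝ), Sol A p C₁ C₂ α b q g u → ∀ (k a β m : ℝ) (x₀ : Euc n) (r : ℝ), 0 < r →
    Loc C₁ p α b q g u k a β m x₀ r → ∀ s : ℝ, 1 < s →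
    a * ∫ x in ball x₀ (r / 2), pp u k x ^ s ≤
      K * (1 / r ^ p * ∫ x in ball x₀ r, pp u k x ^ (s + p - 1)) := by
  obtain ⟨L, hL, hcut⟩ := cutoff n
  refine ⟨2 * Kc p C₁ C₂ * L ^ p, by have := Kc_pos hp hC₁ hC₂; positivity, ?_⟩
  intro A α b q g u h k a β m x₀ r hr hl s hs
  obtain ⟨e, he, he0, he1, hec, hes, heo, heL⟩ := hcut x₀ r hr
  have key := h.cacc_ball hl hs he hec he0 hes heL
  have hpos : 0 ≤ ∫ x, ‖fderiv ℝ u x‖ ^ p * pp u k x ^ (s - 1) * e x ^ p :=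
    integral_nonneg fun x => mul_nonneg (mul_nonneg (by positivity)
      (Real.rpow_nonneg (pp_nonneg _ _ _) _)) (Real.rpow_nonneg (he0 x) _)
  have hc : Continuous (fun x => pp u k x ^ s * e x ^ p) :=
    (pp_pow_cont h.hu.continuous k (by linarith)).mul
      (he.continuous.rpow_const (fun _ => Or.inr (by linarith)))
  have hi := hc.integrable_of_hasCompactSupport (μ := volume) (by
    refine HasCompactSupport.intro hec.isCompact fun x hx => ?_
    rw [image_eq_zero_of_notMem_tsupport hx, Real.zero_rpow (by linarith), mul_zero])
  have hle : ∫ x in ball x₀ (r / 2), pp u k x ^ s ≤ ∫ x, pp u k x ^ s * e x ^ p := by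
    have e1 : ∫ x in ball x₀ (r / 2), pp u k x ^ s = ∫ x in ball x₀ (r / 2), pp u k x ^ s * e x ^ p := by
      apply setIntegral_congr_fun measurableSet_ball
      intro x hx
      simp [heo x hx]
    rw [e1]
    refine setIntegral_le_integral hi (Eventually.of_forall fun x => ?_)
    exact mul_nonneg (Real.rpow_nonneg (pp_nonneg _ _ _) _) (Real.rpow_nonneg (he0 x) _)
  have h1 : a * ∫ x in ball x₀ (r / 2), pp u k x ^ s ≤ a * ∫ x, pp u k x ^ s * e x ^ p :=
    mul_le_mul_of_nonneg_left hle hl.ha.le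
  have h2 : 0 ≤ C₁ / 4 * ∫ x, ‖fderiv ℝ u x‖ ^ p * pp u k x ^ (s - 1) * e x ^ p := by positivity
  rw [Real.div_rpow hL.le hr.le] at key
  have e3 : 2 * Kc p C₁ C₂ * L ^ p * (1 / r ^ p * ∫ x in ball x₀ r, pp u k x ^ (s + p - 1)) =
    2 * (Kc p C₁ C₂ * (L ^ p / r ^ p * ∫ x in ball x₀ r, pp u k x ^ (s + p - 1))) := by ring
  rw [e3]
  linarith

lemma ball_sob (n : ℕ) (hn : 2 ≤ n) {p C₁ C₂ t : ℝ} (hp : 1 < p) (hC₁ : 0 < C₁) (hC₂ : 0 < C₂)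
    (ht : p < t) :
    ∃ K : ℝ, 0 < K ∧ ∀ (A : Euc n → Euc n → Euc n) (α : ℝ) (b q : Euc n → ℝ) (g : ℝ → ℝ)
    (u : Euc n → ℝ), Sol A p C₁ C₂ α b q g u → ∀ (k a β m : ℝ) (x₀ : Euc n) (r : ℝ), 0 < r →
    Loc C₁ p α b q g u k a β m x₀ r →
    ∫ x in ball x₀ (r / 2), pp u k x ^ (t * ((n:ℝ) / (n - 1))) ≤
      K * (1 / r * ∫ x in ball x₀ r, pp u k x ^ t) ^ ((n:ℝ) / (n - 1)) := by
  obtain ⟨L, hL, hcut⟩ := cutoff n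
  obtain ⟨K, hK, hgns⟩ := gns n hn
  have hn' : (2:ℝ) ≤ n := by exact_mod_cast hn
  set κ : ℝ := (n:ℝ) / (n - 1) with hκ
  have hκ0 : 0 < κ := div_pos (by linarith) (by linarith)
  have hKc := Kc_pos hp hC₁ hC₂
  set Q : ℝ := t * (4 / C₁ * (Kc p C₁ C₂ * L ^ p)) + (t + p * L) with hQ
  have hQ0 : 0 < Q := by have : 0 < t := by linarith
                         positivity
  refine ⟨K * Q ^ κ, by positivity, ?_⟩
  intro A α b q g u h k a β m x₀ r hr hl
  obtain ⟨e, he, he0, he1, hec, hes, heo, heL⟩ := hcut x₀ r hr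
  have hs : 1 < t - p + 1 := by linarith
  have key := h.cacc_ball hl hs he hec he0 hes heL
  have est : t - p + 1 + p - 1 = t := by ring
  have est' : t - p + 1 - 1 = t - p := by ring
  rw [est, est'] at key
  have hw0 : ∀ (x : Euc n) (e' : ℝ), 0 ≤ pp u k x ^ e' := fun x e' =>
    Real.rpow_nonneg (pp_nonneg _ _ _) _
  have hep : ContDiff ℝ 1 (fun x => e x ^ p) := by
    have := pp_pow_contDiff he 0 hp
    have e2 : (fun x => e x ^ p) = fun x => pp e 0 x ^ p := by
      funext x
      simp [pp, max_eq_left (he0 x)]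
    rw [e2]; exact this
  have hfe : ∀ x, ‖fderiv ℝ (fun x => e x ^ p) x‖ = p * e x ^ (p - 1) * ‖fderiv ℝ e x‖ := by
    intro x
    have := ((he.differentiable (by norm_num) x).hasFDerivAt.rpow_const (p := p) (Or.inr hp.le)).fderiv
    rw [this, norm_smul, Real.norm_of_nonneg]
    have := Real.rpow_nonneg (he0 x) (p - 1)
    positivity
  have hepc : HasCompactSupport (fun x => e x ^ p) := by
    refine HasCompactSupport.intro hec.isCompact fun x hx => ?_
    rw [image_eq_zero_of_notMem_tsupport hx, Real.zero_rpow (by linarith)]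
  set F : Euc n → ℝ := fun x => pp u k x ^ t * e x ^ p with hF
  have hFC : ContDiff ℝ 1 F := (pp_pow_contDiff h.hu k (by linarith)).mul hep
  have hFc : HasCompactSupport F := hepc.mul_left
  have hF0 : ∀ x, 0 ≤ F x := fun x => mul_nonneg (hw0 _ _) (Real.rpow_nonneg (he0 x) _)
  have hG := hgns F hFC hFc hF0
  have c2 : Continuous (fun x => ‖fderiv ℝ u x‖ ^ p * pp u k x ^ (t - p) * e x ^ p) :=
    ((h.nf_cont (by linarith)).mul (pp_pow_cont h.hu.continuous k (by linarith))).mul hep.continuous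
  have i2 := c2.integrable_of_hasCompactSupport (μ := volume) hepc.mul_left
  have ct : Continuous (fun x => pp u k x ^ t) := pp_pow_cont h.hu.continuous k (by linarith)
  have it := cont_intOn_ball ct x₀ r
  -- gradient bound
  have hgrad : ∀ x, ‖fderiv ℝ F x‖ ≤
      t * r ^ (p - 1) * (‖fderiv ℝ u x‖ ^ p * pp u k x ^ (t - p) * e x ^ p) +
      (t + p * L) / r * (ball x₀ r).indicator (fun x => pp u k x ^ t) x := by
    intro x
    by_cases hx : x ∈ ball x₀ r
    · rw [indicator_of_mem hx]
      have hfd : fderiv ℝ F x = _ := (pp_pow_fderiv h.hu k (by linarith : 1 < t) hep x).fderiv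
      rw [hfd]
      have hep1 : e x ^ p ≤ 1 := Real.rpow_le_one (he0 x) (he1 x) (by linarith)
      have hep2 : e x ^ (p - 1) ≤ 1 := Real.rpow_le_one (he0 x) (he1 x) (by linarith)
      have hep0 : 0 ≤ e x ^ p := Real.rpow_nonneg (he0 x) _
      have hep3 : 0 ≤ e x ^ (p - 1) := Real.rpow_nonneg (he0 x) _
      have ht0 : 0 < t := by linarith
      refine (norm_add_le _ _).trans ?_
      rw [norm_smul, norm_smul, hfe, Real.norm_of_nonneg (hw0 _ _), Real.norm_of_nonneg
        (mul_nonneg (mul_nonneg ht0.le (hw0 _ _)) hep0)]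
      have hy : pp u k x ^ (t - 1) * ‖fderiv ℝ u x‖ ≤ 1 / r * pp u k x ^ t +
          r ^ (p - 1) * (‖fderiv ℝ u x‖ ^ p * pp u k x ^ (t - p)) := by
        rcases (pp_nonneg u k x).eq_or_lt with hw | hw
        · rw [← hw, Real.zero_rpow (by linarith : t - 1 ≠ 0), Real.zero_rpow (by linarith : t ≠ 0),
            Real.zero_rpow (by linarith : t - p ≠ 0)]
          simp
        · have y := young1 (p := p) (ε := 1) (X := pp u k x / r) (Y := ‖fderiv ℝ u x‖) hp one_pos
            (by positivity) (by positivity)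
          rw [Real.div_rpow hw.le hr.le, Real.div_rpow hw.le hr.le] at y
          have y2 := mul_le_mul_of_nonneg_left y
            (mul_nonneg (hw0 x (t - p)) (by positivity : 0 ≤ r ^ (p - 1)))
          have ew1 : pp u k x ^ (t - 1) = pp u k x ^ (t - p) * pp u k x ^ (p - 1) := by
            rw [← Real.rpow_add hw]; congr 1; ring
          have ew2 : pp u k x ^ t = pp u k x ^ (t - p) * pp u k x ^ p := by
            rw [← Real.rpow_add hw]; congr 1; ring
          have er : r ^ p = r ^ (p - 1) * r := by
            rw [← Real.rpow_add_one' hr.le (by linarith)]; congr 1; ring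
          have hrp : 0 < r ^ (p - 1) := by positivity
          rw [ew1, ew2]
          rw [er] at y2
          calc _ = pp u k x ^ (t - p) * r ^ (p - 1) *
              (pp u k x ^ (p - 1) / r ^ (p - 1) * ‖fderiv ℝ u x‖) := by field_simp
            _ ≤ _ := y2
            _ = _ := by simp; field_simp
      have h1 : t * pp u k x ^ (t - 1) * e x ^ p * ‖fderiv ℝ u x‖ ≤
          t / r * pp u k x ^ t +
          t * r ^ (p - 1) * (‖fderiv ℝ u x‖ ^ p * pp u k x ^ (t - p) * e x ^ p) := by
        have := mul_le_mul_of_nonneg_left hy (by positivity : 0 ≤ t * e x ^ p)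
        have h3 : t * e x ^ p * (1 / r * pp u k x ^ t) ≤ t * 1 * (1 / r * pp u k x ^ t) := by
          have := hw0 x t
          gcongr
        calc _ = t * e x ^ p * (pp u k x ^ (t - 1) * ‖fderiv ℝ u x‖) := by ring
          _ ≤ _ := this
          _ = t * e x ^ p * (1 / r * pp u k x ^ t) +
            t * r ^ (p - 1) * (‖fderiv ℝ u x‖ ^ p * pp u k x ^ (t - p) * e x ^ p) := by ring
          _ ≤ t * 1 * (1 / r * pp u k x ^ t) + _ := by gcongr
          _ = _ := by ring
      have h2 : pp u k x ^ t * (p * e x ^ (p - 1) * ‖fderiv ℝ e x‖) ≤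
          p * L / r * pp u k x ^ t := by
        have := hw0 x t
        have := heL x
        calc _ ≤ pp u k x ^ t * (p * 1 * (L / r)) := by gcongr
          _ = _ := by ring
      calc _ ≤ _ := add_le_add h1 h2
        _ = _ := by ring
    · have : fderiv ℝ F x = 0 := by
        apply Sol.fderiv_zero
        intro hx2
        apply hx; apply hes
        refine closure_mono ?_ hx2
        intro y hy hey
        apply hy
        simp only [hF]
        rw [hey, Real.zero_rpow (by linarith), mul_zero]
      rw [this, norm_zero, indicator_of_notMem hx, mul_zero, add_zero]
      have := hw0 x (t - p)
      have := Real.rpow_nonneg (he0 x) p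
      have ht0 : 0 < t := by linarith
      positivity
  have hI : ∫ x, ‖fderiv ℝ F x‖ ≤ Q * (1 / r * ∫ x in ball x₀ r, pp u k x ^ t) := by
    have hii : Integrable ((ball x₀ r).indicator (fun x => pp u k x ^ t)) :=
      it.integrable_indicator measurableSet_ball
    have h1 : ∫ x, ‖fderiv ℝ F x‖ ≤ t * r ^ (p - 1) *
        (∫ x, ‖fderiv ℝ u x‖ ^ p * pp u k x ^ (t - p) * e x ^ p) +
        (t + p * L) / r * ∫ x in ball x₀ r, pp u k x ^ t := by
      refine (integral_mono ?_ ((i2.const_mul (t * r ^ (p - 1))).add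
        (hii.const_mul ((t + p * L) / r))) hgrad).trans ?_
      · exact ((hFC.continuous_fderiv (by norm_num)).integrable_of_hasCompactSupport
          (hFc.fderiv ℝ)).norm
      · refine le_of_eq ((integral_add (i2.const_mul _) (hii.const_mul _)).trans ?_)
        rw [integral_const_mul, integral_const_mul, integral_indicator measurableSet_ball]
    have h2 : 0 ≤ a / 2 * ∫ x, pp u k x ^ (t - p + 1) * e x ^ p := by
      have := hl.ha
      have : 0 ≤ ∫ x, pp u k x ^ (t - p + 1) * e x ^ p :=
        integral_nonneg fun x => mul_nonneg (hw0 _ _) (Real.rpow_nonneg (he0 x) _)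
      positivity
    set I := ∫ x in ball x₀ r, pp u k x ^ t with hIdef
    set J := ∫ x, ‖fderiv ℝ u x‖ ^ p * pp u k x ^ (t - p) * e x ^ p with hJdef
    have h3 : J ≤ 4 / C₁ * (Kc p C₁ C₂ * ((L / r) ^ p * I)) := by
      rw [div_mul_eq_mul_div, le_div_iff₀ hC₁]
      linarith
    rw [Real.div_rpow hL.le hr.le] at h3
    have er : r ^ p = r ^ (p - 1) * r := by
      rw [← Real.rpow_add_one' hr.le (by linarith)]; congr 1; ring
    have hrp : 0 < r ^ (p - 1) := by positivity
    have ht0 : 0 < t := by linarith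
    have h4 := mul_le_mul_of_nonneg_left h3 (by positivity : 0 ≤ t * r ^ (p - 1))
    have h5 : t * r ^ (p - 1) * (4 / C₁ * (Kc p C₁ C₂ * (L ^ p / r ^ p * I))) =
        t * (4 / C₁ * (Kc p C₁ C₂ * L ^ p)) * (1 / r * I) := by
      rw [er]; field_simp
    rw [h5] at h4
    calc _ ≤ _ := h1
      _ ≤ t * (4 / C₁ * (Kc p C₁ C₂ * L ^ p)) * (1 / r * I) + (t + p * L) / r * I := by gcongr
      _ = _ := by rw [hQ]; ring
  have hleft : ∫ x in ball x₀ (r / 2), pp u k x ^ (t * κ) ≤ ∫ x, F x ^ κ := by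
    have e1 : ∫ x in ball x₀ (r / 2), pp u k x ^ (t * κ) = ∫ x in ball x₀ (r / 2), F x ^ κ := by
      apply setIntegral_congr_fun measurableSet_ball
      intro x hx
      simp only [hF]
      rw [heo x hx, Real.one_rpow, mul_one, Real.rpow_mul (pp_nonneg _ _ _)]
    rw [e1]
    refine setIntegral_le_integral ?_ (Eventually.of_forall fun x => Real.rpow_nonneg (hF0 x) _)
    refine (hFC.continuous.rpow_const (fun _ => Or.inr hκ0.le)).integrable_of_hasCompactSupport ?_
    refine HasCompactSupport.intro hFc.isCompact fun x hx => ?_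
    rw [image_eq_zero_of_notMem_tsupport hx, Real.zero_rpow hκ0.ne']
  refine hleft.trans (hG.trans ?_)
  rw [mul_assoc, ← Real.mul_rpow hQ0.le]
  · gcongr
  · have : 0 ≤ ∫ x in ball x₀ r, pp u k x ^ t := integral_nonneg fun x => hw0 _ _
    positivity


lemma vol_ball (n : ℕ) (x₀ : Euc n) {r : ℝ} (hr : 0 < r) :
    volume.real (ball x₀ r) = r ^ n * volume.real (ball (0 : Euc n) 1) := by
  rw [Measure.real, Measure.addHaar_ball_of_pos volume x₀ hr, ENNReal.toReal_mul,
    ENNReal.toReal_ofReal (by positivity)]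
  simp [Measure.real]

lemma vol_ball_pos (n : ℕ) : 0 < volume.real (ball (0 : Euc n) 1) :=
  ENNReal.toReal_pos (measure_ball_pos volume _ one_pos).ne' measure_ball_lt_top.ne

lemma pow_interp {w Y s t : ℝ} (hw : 0 ≤ w) (hY : 0 < Y) (hs : 0 < s) (hst : s ≤ t) :
    w ^ s ≤ Y ^ s + Y ^ (s - t) * w ^ t := by
  rcases le_total w Y with h | h
  · have h1 : w ^ s ≤ Y ^ s := by gcongr
    have : 0 ≤ Y ^ (s - t) * w ^ t := by positivity
    linarith
  · have hw' : 0 < w := lt_of_lt_of_le hY h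
    have h1 : w ^ s ≤ Y ^ (s - t) * w ^ t := by
      have e : w ^ s = w ^ (s - t) * w ^ t := by rw [← Real.rpow_add hw']; congr 1; ring
      rw [e]
      gcongr ?_ * _
      exact Real.rpow_le_rpow_of_nonpos hY h (by linarith)
    have : 0 ≤ Y ^ s := by positivity
    linarith

lemma step_lemma (n : ℕ) (hn : 2 ≤ n) {p C₁ C₂ σ : ℝ} (hp : 1 < p) (hC₁ : 0 < C₁) (hC₂ : 0 < C₂)
    (hσ : p < σ) (hσ2 : σ + p - 1 ≤ σ * ((n:ℝ) / (n - 1))) :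
    ∃ K : ℝ, 0 < K ∧ ∀ (A : Euc n → Euc n → Euc n) (α : ℝ) (b q : Euc n → ℝ) (g : ℝ → ℝ)
    (u : Euc n → ℝ), Sol A p C₁ C₂ α b q g u → ∀ (k a β m : ℝ) (x₀ : Euc n) (r : ℝ), 0 < r →
    Loc C₁ p α b q g u k a β m x₀ r → ∀ Y : ℝ, 0 < Y →
    ∫ x in ball x₀ r, pp u k x ^ σ ≤ r ^ n * Y ^ σ →
    a * ∫ x in ball x₀ (r / 4), pp u k x ^ σ ≤ K * (r ^ n / r ^ p * Y ^ (σ + p - 1)) := by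
  obtain ⟨K₁, hK₁, h1⟩ := ball_sob n hn hp hC₁ hC₂ hσ
  obtain ⟨K₂, hK₂, h2⟩ := ball_a n hp hC₁ hC₂
  set V := volume.real (ball (0 : Euc n) 1) with hV
  have hV0 : 0 < V := vol_ball_pos n
  have hn' : (2:ℝ) ≤ n := by exact_mod_cast hn
  set κ : ℝ := (n:ℝ) / (n - 1) with hκ
  have hκ0 : 0 < κ := div_pos (by linarith) (by linarith)
  refine ⟨K₂ * 2 ^ p * (V + K₁), by positivity, ?_⟩
  intro A α b q g u h k a β m x₀ r hr hl Y hY hI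
  have s1 := h1 A α b q g u h k a β m x₀ r hr hl
  have s2 := h2 A α b q g u h k a β m x₀ (r / 2) (by positivity) (hl.mono (by linarith)) σ
    (by linarith)
  have er4 : r / 2 / 2 = r / 4 := by ring
  rw [er4] at s2
  have s3 : ∫ x in ball x₀ (r / 2), pp u k x ^ (σ * κ) ≤ K₁ * (r ^ n * Y ^ (σ * κ)) := by
    refine s1.trans ?_
    have hI0 : 0 ≤ ∫ x in ball x₀ r, pp u k x ^ σ :=
      integral_nonneg fun x => Real.rpow_nonneg (pp_nonneg _ _ _) _
    have : (1 / r * ∫ x in ball x₀ r, pp u k x ^ σ) ^ κ ≤ (1 / r * (r ^ n * Y ^ σ)) ^ κ := by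
      gcongr
    have e : (1 / r * (r ^ n * Y ^ σ)) ^ κ = r ^ n * Y ^ (σ * κ) := by
      have e1 : 1 / r * (r ^ n * Y ^ σ) = r ^ ((n:ℝ) - 1) * Y ^ σ := by
        rw [Real.rpow_sub_one hr.ne', Real.rpow_natCast]; ring
      rw [e1, Real.mul_rpow (by positivity) (by positivity), ← Real.rpow_mul hr.le,
        ← Real.rpow_mul hY.le]
      congr 1
      rw [hκ, mul_div_cancel₀ _ (by linarith), Real.rpow_natCast]
    rw [e] at this
    gcongr
  have ci : ∀ e : ℝ, 0 ≤ e → IntegrableOn (fun x => pp u k x ^ e) (ball x₀ (r / 2)) := fun e he =>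
    cont_intOn_ball (pp_pow_cont h.hu.continuous k he) _ _
  have s4 : ∫ x in ball x₀ (r / 2), pp u k x ^ (σ + p - 1) ≤
      (V + K₁) * (r ^ n * Y ^ (σ + p - 1)) := by
    have hpt : ∫ x in ball x₀ (r / 2), pp u k x ^ (σ + p - 1) ≤
        ∫ x in ball x₀ (r / 2), (Y ^ (σ + p - 1) + Y ^ (σ + p - 1 - σ * κ) * pp u k x ^ (σ * κ)) := by
      refine setIntegral_mono (ci _ (by linarith)) ?_ fun x => ?_
      · exact (integrableOn_const measure_ball_lt_top.ne).add
          ((ci _ (by nlinarith)).const_mul _)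
      · exact pow_interp (pp_nonneg _ _ _) hY (by linarith) hσ2
    have ic : IntegrableOn (fun _ : Euc n => Y ^ (σ + p - 1)) (ball x₀ (r / 2)) :=
      integrableOn_const measure_ball_lt_top.ne
    have ic2 : Integrable (fun x => pp u k x ^ (σ * κ)) (volume.restrict (ball x₀ (r / 2))) :=
      ci _ (by nlinarith)
    rw [integral_add ic.integrable
      (ic2.const_mul _), integral_const_mul, setIntegral_const, smul_eq_mul,
      vol_ball n x₀ (by positivity)] at hpt
    have h5 : Y ^ (σ + p - 1 - σ * κ) * ∫ x in ball x₀ (r / 2), pp u k x ^ (σ * κ) ≤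
        Y ^ (σ + p - 1 - σ * κ) * (K₁ * (r ^ n * Y ^ (σ * κ))) := by gcongr
    have h6 : Y ^ (σ + p - 1 - σ * κ) * (K₁ * (r ^ n * Y ^ (σ * κ))) =
        K₁ * (r ^ n * Y ^ (σ + p - 1)) := by
      have : Y ^ (σ + p - 1) = Y ^ (σ + p - 1 - σ * κ) * Y ^ (σ * κ) := by
        rw [← Real.rpow_add hY]; congr 1; ring
      rw [this]; ring
    have h7 : (r / 2) ^ n * V * Y ^ (σ + p - 1) ≤ r ^ n * V * Y ^ (σ + p - 1) := by
      have : r / 2 ≤ r := by linarith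
      gcongr
    rw [← hV] at hpt
    calc _ ≤ _ := hpt
      _ ≤ r ^ n * V * Y ^ (σ + p - 1) + K₁ * (r ^ n * Y ^ (σ + p - 1)) := by linarith
      _ = _ := by ring
  refine s2.trans ?_
  rw [Real.div_rpow hr.le (by norm_num)]
  calc _ ≤ K₂ * (1 / (r ^ p / 2 ^ p) * ((V + K₁) * (r ^ n * Y ^ (σ + p - 1)))) := by gcongr
    _ = _ := by field_simp

/-- scale function -/
def Ysc (a p ε r : ℝ) : ℝ := ε * (a * r ^ p) ^ (1 / (p - 1))

lemma Ysc_pos {a p ε r : ℝ} (ha : 0 < a) (hε : 0 < ε) (hr : 0 < r) : 0 < Ysc a p ε r := by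
  unfold Ysc; positivity

lemma Ysc_quarter {a p ε r : ℝ} (ha : 0 < a) (hr : 0 < r) :
    Ysc a p ε (r / 4) = ((4:ℝ) ^ p) ^ (-(1 / (p - 1))) * Ysc a p ε r := by
  unfold Ysc
  rw [Real.div_rpow hr.le (by norm_num), Real.rpow_neg (by positivity), mul_div_assoc',
    Real.div_rpow (by positivity) (by positivity)]
  ring

lemma Ysc_pow {a p ε r : ℝ} (hp : 1 < p) (ha : 0 < a) (hε : 0 < ε) (hr : 0 < r) :
    Ysc a p ε r ^ (p - 1) = ε ^ (p - 1) * (a * r ^ p) := by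
  unfold Ysc
  rw [Real.mul_rpow hε.le (by positivity), ← Real.rpow_mul (by positivity),
    one_div_mul_cancel (by linarith), Real.rpow_one]

lemma nondeg_core (n : ℕ) (hn : 2 ≤ n) {p C₁ C₂ : ℝ} (hp : 1 < p) (hC₁ : 0 < C₁) (hC₂ : 0 < C₂) :
    ∃ c : ℝ, 0 < c ∧ ∀ (A : Euc n → Euc n → Euc n) (α : ℝ) (b q : Euc n → ℝ) (g : ℝ → ℝ)
    (u : Euc n → ℝ), Sol A p C₁ C₂ α b q g u → ∀ (k a β m : ℝ) (x₀ : Euc n) (R : ℝ), 0 < R →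
    Loc C₁ p α b q g u k a β m x₀ R → k < u x₀ → Ysc a p c R < m := by
  have hn' : (2:ℝ) ≤ n := by exact_mod_cast hn
  set σ : ℝ := n * (p - 1) + 2 with hσd
  have hσ : p < σ := by nlinarith
  have hσ2 : σ + p - 1 ≤ σ * ((n:ℝ) / (n - 1)) := by
    have : σ * ((n:ℝ) / (n - 1)) = σ + σ / (n - 1) := by
      field_simp [show (n:ℝ) - 1 ≠ 0 by linarith]; ring
    rw [this]
    have : p - 1 ≤ σ / (n - 1) := by
      rw [le_div_iff₀ (by linarith)]; nlinarith
    linarith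
  obtain ⟨K, hK, hstep⟩ := step_lemma n hn hp hC₁ hC₂ hσ hσ2
  set V := volume.real (ball (0 : Euc n) 1) with hV
  have hV0 : 0 < V := vol_ball_pos n
  set d : ℝ := ((4:ℝ) ^ p) ^ (-(1 / (p - 1))) with hd
  have hd0 : 0 < d := by positivity
  have hd1 : d < 1 := by
    apply Real.rpow_lt_one_of_one_lt_of_neg
    · exact Real.one_lt_rpow (by norm_num) (by linarith)
    · have : 0 < 1 / (p - 1) := one_div_pos.2 (by linarith)
      linarith
  set ε : ℝ := (d ^ σ / 4 ^ n / K) ^ (1 / (p - 1)) with hε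
  have hε0 : 0 < ε := by positivity
  have hεK : K * ε ^ (p - 1) = d ^ σ / 4 ^ n := by
    rw [hε, ← Real.rpow_mul (by positivity), one_div_mul_cancel (by linarith), Real.rpow_one]
    field_simp
  refine ⟨ε * (1 / V) ^ (1 / σ), by positivity, ?_⟩
  intro A α b q g u h k a β m x₀ R hR hl hx₀
  by_contra! hcon
  have ha := hl.ha
  have hw0 : ∀ (x : Euc n) (e' : ℝ), 0 ≤ pp u k x ^ e' := fun x e' =>
    Real.rpow_nonneg (pp_nonneg _ _ _) _
  have ci : ∀ (e r : ℝ), 0 ≤ e → IntegrableOn (fun x => pp u k x ^ e) (ball x₀ r) := fun e r he =>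
    cont_intOn_ball (pp_pow_cont h.hu.continuous k he) _ _
  have hσ0 : 0 < σ := by linarith
  have hStart : ∫ x in ball x₀ R, pp u k x ^ σ ≤ R ^ n * Ysc a p ε R ^ σ := by
    have h1 : ∫ x in ball x₀ R, pp u k x ^ σ ≤ ∫ x in ball x₀ R, m ^ σ := by
      refine setIntegral_mono_on (ci _ _ hσ0.le) (integrableOn_const measure_ball_lt_top.ne)
        measurableSet_ball fun x hx => ?_
      have h2 : pp u k x ≤ m := by
        unfold pp
        exact max_le (by linarith [hl.hm x hx]) hl.hm0
      have := pp_nonneg u k x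
      gcongr
    refine h1.trans ?_
    rw [setIntegral_const, smul_eq_mul, vol_ball n x₀ hR, ← hV]
    have h2 : m ^ σ ≤ Ysc a p ε R ^ σ / V := by
      have h3 : m ≤ (1 / V) ^ (1 / σ) * Ysc a p ε R := by
        refine hcon.trans (le_of_eq ?_)
        unfold Ysc; ring
      have h4 : m ^ σ ≤ ((1 / V) ^ (1 / σ) * Ysc a p ε R) ^ σ := by
        have := hl.hm0
        gcongr
      refine h4.trans (le_of_eq ?_)
      rw [Real.mul_rpow (by positivity) (Ysc_pos ha hε0 hR).le, ← Real.rpow_mul (by positivity),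
        one_div_mul_cancel hσ0.ne', Real.rpow_one]
      ring
    calc R ^ n * V * m ^ σ ≤ R ^ n * V * (Ysc a p ε R ^ σ / V) := by gcongr
      _ = _ := by field_simp
  have iter : ∀ j : ℕ, ∫ x in ball x₀ (R / 4 ^ j), pp u k x ^ σ ≤
      (R / 4 ^ j) ^ n * Ysc a p ε (R / 4 ^ j) ^ σ := by
    intro j
    induction j with
    | zero => simpa using hStart
    | succ j ih =>
      set r := R / 4 ^ j with hr
      have hr0 : 0 < r := by positivity
      have er : R / 4 ^ (j + 1) = r / 4 := by rw [hr, pow_succ]; field_simp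
      rw [er]
      have hrR : r ≤ R := div_le_self hR.le (one_le_pow₀ (by norm_num))
      have hY := Ysc_pos (p := p) ha hε0 hr0
      have st := hstep A α b q g u h k a β m x₀ r hr0 (hl.mono hrR) _ hY ih
      rw [Ysc_quarter ha hr0, ← hd, Real.mul_rpow hd0.le hY.le]
      have e1 : Ysc a p ε r ^ (σ + p - 1) = Ysc a p ε r ^ σ * (ε ^ (p - 1) * (a * r ^ p)) := by
        rw [← Ysc_pow hp ha hε0 hr0, ← Real.rpow_add hY]; congr 1; ring
      rw [e1] at st
      have hrp : 0 < r ^ p := by positivity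
      have e2 : K * (r ^ n / r ^ p * (Ysc a p ε r ^ σ * (ε ^ (p - 1) * (a * r ^ p)))) =
          a * (K * ε ^ (p - 1) * r ^ n * Ysc a p ε r ^ σ) := by field_simp
      rw [e2, hεK] at st
      have st2 := le_of_mul_le_mul_left st ha
      refine st2.trans (le_of_eq ?_)
      have e4 : (r / 4) ^ n = r ^ n / 4 ^ n := div_pow _ _ _
      rw [e4]
      generalize Ysc a p ε r ^ σ = X
      field_simp
  -- contradiction
  have hdx : 0 < pp u k x₀ := by unfold pp; exact lt_max_of_lt_left (by linarith)
  have hcont := (pp_cont h.hu.continuous k).tendsto x₀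
  have hev := hcont.eventually (lt_mem_nhds (half_lt_self hdx))
  obtain ⟨ρ, hρ, hball⟩ := Metric.eventually_nhds_iff_ball.1 hev
  have hYj : ∀ j : ℕ, Ysc a p ε (R / 4 ^ j) = d ^ j * Ysc a p ε R := by
    intro j
    induction j with
    | zero => simp
    | succ j ih =>
      have er : R / 4 ^ (j + 1) = R / 4 ^ j / 4 := by rw [pow_succ]; field_simp
      rw [er, Ysc_quarter ha (by positivity), ih, ← hd, pow_succ]; ring
  have t1 : Tendsto (fun j : ℕ => R / 4 ^ j) atTop (nhds 0) := by
    have := (tendsto_pow_atTop_nhds_zero_of_lt_one (by norm_num : (0:ℝ) ≤ 1 / 4) (by norm_num)).const_mul R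
    simpa [div_eq_mul_inv] using this
  have t2 : Tendsto (fun j : ℕ => (d ^ j * Ysc a p ε R) ^ σ) atTop (nhds 0) := by
    have := ((tendsto_pow_atTop_nhds_zero_of_lt_one hd0.le hd1).mul_const (Ysc a p ε R))
    rw [zero_mul] at this
    have := this.rpow_const (p := σ) (Or.inr hσ0.le)
    rwa [Real.zero_rpow hσ0.ne'] at this
  have hc0 : 0 < V * (pp u k x₀ / 2) ^ σ := by positivity
  obtain ⟨j, hj1, hj2⟩ := ((t1.eventually (gt_mem_nhds hρ)).and (t2.eventually (gt_mem_nhds hc0))).exists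
  have := iter j
  have hr0 : 0 < R / 4 ^ j := by positivity
  have low : (R / 4 ^ j) ^ n * V * (pp u k x₀ / 2) ^ σ ≤ ∫ x in ball x₀ (R / 4 ^ j), pp u k x ^ σ := by
    have e : (R / 4 ^ j) ^ n * V * (pp u k x₀ / 2) ^ σ =
        ∫ x in ball x₀ (R / 4 ^ j), (pp u k x₀ / 2) ^ σ := by
      rw [setIntegral_const, smul_eq_mul, vol_ball n x₀ hr0]
    rw [e]
    refine setIntegral_mono_on (integrableOn_const measure_ball_lt_top.ne) (ci _ _ hσ0.le)
        measurableSet_ball fun x hx => ?_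
    have h2 := hball x (ball_subset_ball hj1.le hx)
    gcongr
  have h3 := low.trans this
  rw [mul_assoc] at h3
  have h4 := le_of_mul_le_mul_left h3 (by positivity)
  rw [hYj] at h4
  linarith

lemma beta_lemma {p C₁ α a β m R : ℝ} (hp : 1 < p) (hα₁ : p - 1 ≤ α) (hα₂ : α ≤ p) (ha : 0 < a)
    (hβ0 : 0 ≤ β) (hR : 0 < R) {ε : ℝ} (hε : 0 < ε) (hεC : ε * 2 ^ ((p - α) / α) ≤ C₁ / 4)
    (hm0 : 0 ≤ m) (hm : m ≤ Ysc a p ε R)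
    (hcond : R * a ^ ((α - p + 1) / α) * β ^ ((p - 1) / α) ≤ 1) :
    ∀ D w : ℝ, 0 ≤ D → 0 ≤ w → w ≤ m → β * D ^ α * w ≤ a / 2 * w + C₁ / 4 * D ^ p := by
  intro D w hD hw hwm
  have hα : 0 < α := by linarith
  have hC₁ : 0 < C₁ := by
    have : 0 < ε * 2 ^ ((p - α) / α) := by positivity
    linarith
  have hDp : 0 ≤ C₁ / 4 * D ^ p := by positivity
  rcases le_or_gt (β * D ^ α) (a / 2) with hcase | hcase
  · have : β * D ^ α * w ≤ a / 2 * w := by gcongr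
    linarith
  have hβ : 0 < β := by
    rcases hβ0.eq_or_lt with h | h
    · rw [← h] at hcase; simp at hcase; linarith
    · exact h
  have hDpos : 0 < D := by
    rcases hD.eq_or_lt with h | h
    · rw [← h, Real.zero_rpow hα.ne'] at hcase; simp at hcase; linarith
    · exact h
  have key : β * m ≤ C₁ / 4 * D ^ (p - α) := by
    have hp1 : 0 < p - 1 := by linarith
    -- m β^{p/α} ≤ ε a^{(p-α)/α}
    have h1 : R ^ (p / (p - 1)) * a ^ ((α - p + 1) / α * (p / (p - 1))) * β ^ (p / α) ≤ 1 := by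
      have := Real.rpow_le_rpow (by positivity) hcond (by positivity : 0 ≤ p / (p - 1))
      rw [Real.one_rpow, Real.mul_rpow (by positivity) (by positivity),
        Real.mul_rpow (by positivity) (by positivity), ← Real.rpow_mul ha.le,
        ← Real.rpow_mul hβ.le] at this
      have e : (p - 1) / α * (p / (p - 1)) = p / α := by field_simp
      rwa [e] at this
    have h2 : m * β ^ (p / α) ≤ ε * a ^ ((p - α) / α) := by
      have h3 : Ysc a p ε R = ε * a ^ ((p - α) / α) *
          (R ^ (p / (p - 1)) * a ^ ((α - p + 1) / α * (p / (p - 1)))) := by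
        unfold Ysc
        rw [Real.mul_rpow ha.le (by positivity), ← Real.rpow_mul hR.le]
        have e1 : a ^ (1 / (p - 1)) = a ^ ((p - α) / α) * a ^ ((α - p + 1) / α * (p / (p - 1))) := by
          rw [← Real.rpow_add ha]; congr 1; field_simp; ring
        rw [e1, mul_one_div]; ring
      calc m * β ^ (p / α) ≤ Ysc a p ε R * β ^ (p / α) := by gcongr
        _ = ε * a ^ ((p - α) / α) * (R ^ (p / (p - 1)) * a ^ ((α - p + 1) / α * (p / (p - 1))) *
            β ^ (p / α)) := by rw [h3]; ring
        _ ≤ ε * a ^ ((p - α) / α) * 1 := by gcongr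
        _ = _ := mul_one _
    have h4 : a ^ ((p - α) / α) ≤ 2 ^ ((p - α) / α) * (β ^ ((p - α) / α) * D ^ (p - α)) := by
      have : a ≤ 2 * (β * D ^ α) := by linarith
      have h5 := Real.rpow_le_rpow ha.le this (div_nonneg (by linarith) hα.le : 0 ≤ (p - α) / α)
      rw [Real.mul_rpow (by norm_num) (by positivity), Real.mul_rpow (by positivity) (by positivity),
        ← Real.rpow_mul hD] at h5
      have e : α * ((p - α) / α) = p - α := by field_simp
      rwa [e] at h5
    have e2 : β ^ (p / α) = β ^ ((p - α) / α) * β := by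
      rw [← Real.rpow_add_one hβ.ne']; congr 1; field_simp; ring
    rw [e2] at h2
    have h6 : β ^ ((p - α) / α) * (β * m) ≤ β ^ ((p - α) / α) * (C₁ / 4 * D ^ (p - α)) := by
      calc β ^ ((p - α) / α) * (β * m) = m * (β ^ ((p - α) / α) * β) := by ring
        _ ≤ ε * a ^ ((p - α) / α) := h2
        _ ≤ ε * (2 ^ ((p - α) / α) * (β ^ ((p - α) / α) * D ^ (p - α))) := by gcongr
        _ = (ε * 2 ^ ((p - α) / α)) * (β ^ ((p - α) / α) * D ^ (p - α)) := by ring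
        _ ≤ C₁ / 4 * (β ^ ((p - α) / α) * D ^ (p - α)) := by gcongr
        _ = _ := by ring
    exact le_of_mul_le_mul_left h6 (by positivity)
  have e3 : D ^ p = D ^ α * D ^ (p - α) := by rw [← Real.rpow_add hDpos]; congr 1; ring
  calc β * D ^ α * w ≤ β * D ^ α * m := by gcongr
    _ = D ^ α * (β * m) := by ring
    _ ≤ D ^ α * (C₁ / 4 * D ^ (p - α)) := by gcongr
    _ = C₁ / 4 * D ^ p := by rw [e3]; ring
    _ ≤ _ := by have : 0 ≤ a / 2 * w := by positivity
                linarith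

/-- nondegeneracy -/
lemma nondeg (n : ℕ) (hn : 2 ≤ n) {p C₁ C₂ α : ℝ} (hp : 1 < p) (hC₁ : 0 < C₁) (hC₂ : 0 < C₂)
    (hα₁ : p - 1 ≤ α) (hα₂ : α ≤ p) :
    ∃ c : ℝ, 0 < c ∧ ∀ (A : Euc n → Euc n → Euc n) (b q : Euc n → ℝ) (g : ℝ → ℝ)
    (u : Euc n → ℝ), Sol A p C₁ C₂ α b q g u → ∀ (k a β m : ℝ) (x₀ : Euc n) (R : ℝ), 0 < R →
    0 < a → 0 ≤ β → (∀ᵐ x, x ∈ ball x₀ R → k < u x → a ≤ q x * g (u x)) →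
    (∀ᵐ x, x ∈ ball x₀ R → b x ≤ β) → (∀ x ∈ ball x₀ R, u x ≤ k + m) →
    R * a ^ ((α - p + 1) / α) * β ^ ((p - 1) / α) ≤ 1 → k < u x₀ → Ysc a p c R < m := by
  obtain ⟨c, hc, h⟩ := nondeg_core n hn hp hC₁ hC₂
  set ε : ℝ := C₁ / 4 / 2 ^ ((p - α) / α) with hε
  have hε0 : 0 < ε := by positivity
  refine ⟨min c ε, lt_min hc hε0, ?_⟩
  intro A b q g u hs k a β m x₀ R hR ha hβ h1 h2 h3 h4 h5
  by_contra! hcon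
  have hmono : ∀ x y, x ≤ y → Ysc a p x R ≤ Ysc a p y R := fun x y hxy => by
    unfold Ysc; gcongr
  have hm0 : 0 ≤ m := by
    have := h3 x₀ (mem_ball_self hR); linarith
  have hl : Loc C₁ p α b q g u k a β m x₀ R :=
    ⟨ha, h1, h2, h3, hm0, beta_lemma hp hα₁ hα₂ ha hβ hR hε0
      (by rw [hε, div_mul_cancel₀ _ (by positivity)]) hm0 (hcon.trans (hmono _ _ (min_le_right _ _))) h4⟩
  have := h A α b q g u hs k a β m x₀ R hR hl h5
  linarith [hmono _ _ (min_le_left c ε)]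


/-- the set used in the maximum principle -/
def Emp {n : ℕ} (u : Euc n → ℝ) (r k : ℝ) : Set (Euc n) :=
  ball 0 r ∩ ({x | fderiv ℝ u x ≠ 0} ∩ {x | k < u x})

lemma Emp_meas {n : ℕ} {u : Euc n → ℝ} (hu : ContDiff ℝ 1 u) (r k : ℝ) :
    MeasurableSet (Emp u r k) := by
  refine (isOpen_ball.inter (IsOpen.inter ?_ ?_)).measurableSet
  · exact isOpen_ne_fun (hu.continuous_fderiv (by norm_num)) continuous_const
  · exact isOpen_lt continuous_const hu.continuous

namespace Sol
variable {n : ℕ} {A : Euc n → Euc n → Euc n} {p C₁ C₂ α : ℝ} {b q : Euc n → ℝ} {g : ℝ → ℝ}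
    {u : Euc n → ℝ}

lemma mp_core (h : Sol A p C₁ C₂ α b q g u) {r k Λ : ℝ} {χ : Euc n → ℝ} (hχ : ContDiff ℝ 1 χ)
    (hχc : HasCompactSupport χ) (hχ0 : ∀ x, 0 ≤ χ x) (hχs : tsupport χ ⊆ ball 0 r)
    (hone : ∀ x ∈ ball (0 : Euc n) r, k < u x → fderiv ℝ χ x = 0) (hΛ : 0 ≤ Λ)
    (hb : ∀ x ∈ ball (0 : Euc n) r, b x * ‖fderiv ℝ u x‖ ^ α ≤ Λ * ‖fderiv ℝ u x‖ ^ (p - 1)) :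
    ∫ x, ‖fderiv ℝ (fun x => pp u k x ^ (p + 1) * χ x) x‖ ≤
      (p + 1) * ((1 / C₁) ^ (p - 1) * Λ ^ p / C₁ + 1) *
        ∫ x in Emp u r k, pp u k x ^ (p + 1) * χ x := by
  have hp := h.hp
  have hC₁ := h.hC₁
  set E := Emp u r k with hE
  have hEm : MeasurableSet E := Emp_meas h.hu r k
  set F : Euc n → ℝ := fun x => pp u k x ^ (p + 1) * χ x with hF
  set K : ℝ := (1 / C₁) ^ (p - 1) * Λ ^ p with hK
  have hK0 : 0 ≤ K := by positivity
  have hFC : ContDiff ℝ 1 F := (pp_pow_contDiff h.hu k (by linarith)).mul hχ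
  have hFc : HasCompactSupport F := hχc.mul_left
  have hF0 : ∀ x, 0 ≤ F x := fun x => mul_nonneg (Real.rpow_nonneg (pp_nonneg _ _ _) _) (hχ0 x)
  have hFi : Integrable F := hFC.continuous.integrable_of_hasCompactSupport hFc
  have hFE : Integrable (E.indicator F) := hFi.indicator hEm
  set P : Euc n → ℝ := fun x => ‖fderiv ℝ u x‖ ^ p * pp u k x * χ x with hP
  have hPi : Integrable P := by
    refine Continuous.integrable_of_hasCompactSupport ?_ hχc.mul_left
    exact ((h.nf_cont (by linarith)).mul (pp_cont h.hu.continuous k)).mul hχ.continuous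
  -- indicator facts
  have hind0 : ∀ x, 0 ≤ E.indicator F x := fun x => indicator_nonneg (fun x _ => hF0 x) x
  have hout : ∀ x, x ∉ ball (0 : Euc n) r → χ x = 0 ∧ fderiv ℝ χ x = 0 := fun x hx =>
    ⟨image_eq_zero_of_notMem_tsupport fun hh => hx (hχs hh), fderiv_zero fun hh => hx (hχs hh)⟩
  have hwF : ∀ x, 0 < pp u k x → F x = pp u k x ^ p * pp u k x * χ x := fun x hx => by
    simp only [hF]; rw [Real.rpow_add_one hx.ne']
  have hkpp : ∀ x, 0 < pp u k x → k < u x := fun x hx => by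
    by_contra! hc
    have : pp u k x = 0 := by unfold pp; exact max_eq_right (by linarith)
    linarith
  -- tested
  have ht := h.tested k (by norm_num : (1:ℝ) < 2) hχ hχc hχ0
    (H := fun x => -(C₁ * P x) + K * E.indicator F x)
    ((hPi.const_mul _).neg.add (hFE.const_mul _)) (Eventually.of_forall fun x => by
      have e21 : (2:ℝ) - 1 = 1 := by norm_num
      rw [e21, Real.rpow_one, Real.rpow_two]
      rcases (pp_nonneg u k x).eq_or_lt with hw | hw
      · have := hind0 x
        simp only [hP, ← hw]
        simp
        positivity
      by_cases hx : x ∈ ball (0 : Euc n) r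
      · have hku := hkpp x hw
        rw [hone x hx hku, norm_zero, mul_zero, mul_zero, add_zero]
        have hqg : 0 ≤ q x * g (u x) := mul_nonneg (h.hq0 x) (h.hg0 _ (h.hu0 x))
        have hw2 : 0 ≤ pp u k x ^ 2 * χ x := mul_nonneg (by positivity) (hχ0 x)
        have h1 : (b x * ‖fderiv ℝ u x‖ ^ α - q x * g (u x)) * (pp u k x ^ 2 * χ x) ≤
            Λ * ‖fderiv ℝ u x‖ ^ (p - 1) * (pp u k x ^ 2 * χ x) := by
          have := hb x hx
          gcongr
          linarith
        by_cases hD : fderiv ℝ u x = 0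
        · have := hind0 x
          simp only [hP]
          rw [hD, norm_zero, Real.zero_rpow (by linarith : p - 1 ≠ 0)] at h1
          rw [hD, norm_zero, Real.zero_rpow (by linarith : p ≠ 0)]
          simp only [zero_mul, mul_zero, sub_zero, neg_zero, zero_add] at h1 ⊢
          refine h1.trans (by positivity)
        · have hxE : x ∈ E := ⟨hx, hD, hku⟩
          rw [indicator_of_mem hxE, hwF x hw]
          have y := young1 (p := p) (ε := C₁) (X := ‖fderiv ℝ u x‖) (Y := Λ * pp u k x) hp hC₁
            (by positivity) (by positivity)
          rw [Real.mul_rpow hΛ hw.le] at y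
          have y2 := mul_le_mul_of_nonneg_right y (mul_nonneg hw.le (hχ0 x))
          simp only [hP, hK]
          nlinarith
      · rw [(hout x hx).1, (hout x hx).2]
        have := hind0 x
        simp [hP, (hout x hx).1]
        positivity)
  have ei : ∫ x, (-(C₁ * P x) + K * E.indicator F x) =
      -(C₁ * ∫ x, P x) + K * ∫ x in E, F x := by
    have e1 := integral_add (hPi.const_mul C₁).neg (hFE.const_mul K)
    simp only [Pi.neg_apply] at e1
    rw [e1, integral_neg, integral_const_mul, integral_const_mul, integral_indicator hEm]
  rw [ei] at ht
  have hPle : ∫ x, P x ≤ K / C₁ * ∫ x in E, F x := by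
    rw [div_mul_eq_mul_div, le_div_iff₀ hC₁]; linarith
  -- gradient
  have hgrad : ∀ x, ‖fderiv ℝ F x‖ ≤ (p + 1) * P x + (p + 1) * E.indicator F x := by
    intro x
    have hfd : fderiv ℝ F x = _ := (pp_pow_fderiv h.hu k (by linarith : 1 < p + 1) hχ x).fderiv
    have hz : pp u k x ^ (p + 1) • fderiv ℝ χ x = 0 := by
      rcases (pp_nonneg u k x).eq_or_lt with hw | hw
      · rw [← hw, Real.zero_rpow (by linarith), zero_smul]
      · by_cases hx : x ∈ ball (0 : Euc n) r
        · rw [hone x hx (hkpp x hw), smul_zero]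
        · rw [(hout x hx).2, smul_zero]
    rw [hfd, hz, add_zero, norm_smul, add_sub_cancel_right]
    have hi := hind0 x
    have hP0 : 0 ≤ P x := mul_nonneg (mul_nonneg (by positivity) (pp_nonneg _ _ _)) (hχ0 x)
    have hpw : 0 ≤ pp u k x ^ p := Real.rpow_nonneg (pp_nonneg _ _ _) _
    rw [Real.norm_of_nonneg (mul_nonneg (by positivity) (hχ0 x))]
    have hr0 : 0 ≤ (p + 1) * P x + (p + 1) * E.indicator F x := by positivity
    by_cases hD : fderiv ℝ u x = 0
    · rw [hD, norm_zero, mul_zero]; exact hr0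
    by_cases hx : x ∈ ball (0 : Euc n) r
    swap
    · rw [(hout x hx).1, mul_zero, zero_mul]; exact hr0
    rcases (pp_nonneg u k x).eq_or_lt with hw | hw
    · rw [← hw, Real.zero_rpow (by linarith), mul_zero, zero_mul, zero_mul]; exact hr0
    have hxE : x ∈ E := ⟨hx, hD, hkpp x hw⟩
    rw [indicator_of_mem hxE, hwF x hw]
    have y := young1 (p := p) (ε := 1) (X := pp u k x) (Y := ‖fderiv ℝ u x‖) hp one_pos
            (by positivity) (by positivity)
    have y2 := mul_le_mul_of_nonneg_right y (mul_nonneg hw.le (hχ0 x))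
    have e : pp u k x ^ p = pp u k x ^ (p - 1) * pp u k x := by
      rw [← Real.rpow_add_one hw.ne']; congr 1; ring
    simp only [div_one, Real.one_rpow, one_mul] at y2
    have y3 := mul_le_mul_of_nonneg_left y2 (by linarith : 0 ≤ p + 1)
    calc (p + 1) * pp u k x ^ p * χ x * ‖fderiv ℝ u x‖ =
        (p + 1) * (pp u k x ^ (p - 1) * ‖fderiv ℝ u x‖ * (pp u k x * χ x)) := by rw [e]; ring
      _ ≤ _ := y3
      _ = _ := by simp only [hP]; ring
  refine (integral_mono ((hFC.continuous_fderiv (by norm_num)).integrable_of_hasCompactSupport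
          (hFc.fderiv ℝ)).norm ((hPi.const_mul _).add (hFE.const_mul _)) hgrad).trans ?_
  refine (integral_add (hPi.const_mul _) (hFE.const_mul _)).le.trans ?_
  rw [integral_const_mul, integral_const_mul, integral_indicator hEm]
  have := mul_le_mul_of_nonneg_left hPle (by linarith : 0 ≤ p + 1)
  calc _ ≤ (p + 1) * (K / C₁ * ∫ x in E, F x) + (p + 1) * ∫ x in E, F x := by linarith
    _ = _ := by ring

end Sol

lemma sph_bdd {n : ℕ} {u : Euc n → ℝ} (hu : Continuous u) (r : ℝ) :
    BddAbove (u '' sphere (0 : Euc n) r) :=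
  ((isCompact_sphere (0 : Euc n) r).image hu).bddAbove

lemma le_sphMax {n : ℕ} {u : Euc n → ℝ} (hu : Continuous u) (x : Euc n) :
    u x ≤ sphMax u ‖x‖ :=
  le_csSup (sph_bdd hu _) ⟨x, by simp, rfl⟩

lemma Emp_tendsto {n : ℕ} {u : Euc n → ℝ} (hu : ContDiff ℝ 1 u) {r m k₀ : ℝ}
    (hm : ∀ x ∈ ball (0 : Euc n) r, u x ≤ m) (hk : k₀ < m) :
    Tendsto (fun j : ℕ => volume.real (Emp u r (m - (m - k₀) / (j + 1)))) atTop (nhds 0) := by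
  have hmono : Antitone (fun j : ℕ => Emp u r (m - (m - k₀) / (j + 1))) := by
    intro i j hij x hx
    have hxu : m - (m - k₀) / ((j:ℝ) + 1) < u x := hx.2.2
    refine ⟨hx.1, hx.2.1, ?_⟩
    change m - (m - k₀) / ((i:ℝ) + 1) < u x
    have : (i:ℝ) ≤ j := by exact_mod_cast hij
    have : (m - k₀) / (j + 1) ≤ (m - k₀) / (i + 1) := by
      have : 0 ≤ m - k₀ := by linarith
      gcongr
    linarith
  have hfin : ∀ j : ℕ, volume (Emp u r (m - (m - k₀) / (j + 1))) ≠ ∞ := fun j =>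
    ((measure_mono inter_subset_left).trans_lt measure_ball_lt_top).ne
  have ht := tendsto_measure_iInter_atTop (μ := volume)
    (fun j : ℕ => (Emp_meas hu r (m - (m - k₀) / (j + 1))).nullMeasurableSet) hmono ⟨0, hfin 0⟩
  have hempty : ⋂ j : ℕ, Emp u r (m - (m - k₀) / (j + 1)) = ∅ := by
    rw [eq_empty_iff_forall_notMem]
    intro x hx
    rw [mem_iInter] at hx
    have hxb := (hx 0).1
    have hum : m ≤ u x := by
      have t : Tendsto (fun j : ℕ => m - (m - k₀) / ((j:ℝ) + 1)) atTop (nhds (m - 0)) := by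
        refine tendsto_const_nhds.sub ?_
        have := (tendsto_one_div_add_atTop_nhds_zero_nat (𝕜 := ℝ)).const_mul (m - k₀)
        simpa [div_eq_mul_inv] using this
      rw [sub_zero] at t
      exact le_of_tendsto t (Eventually.of_forall fun j => (hx j).2.2.le)
    apply (hx 0).2.1
    apply IsLocalMax.fderiv_eq_zero
    filter_upwards [isOpen_ball.mem_nhds hxb] with y hy
    exact (hm y hy).trans hum
  rw [hempty, measure_empty] at ht
  have := (ENNReal.tendsto_toReal ENNReal.zero_ne_top).comp ht
  simpa [Measure.real, Function.comp_def] using this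

lemma Sol.max_princ {n : ℕ} (hn : 2 ≤ n) {A : Euc n → Euc n → Euc n} {p C₁ C₂ α : ℝ}
    {b q : Euc n → ℝ} {g : ℝ → ℝ}
    {u : Euc n → ℝ} (h : Sol A p C₁ C₂ α b q g u) {r : ℝ} (hr : 0 < r) {y : Euc n}
    (hy : ‖y‖ ≤ r) : u y ≤ sphMax u r := by
  by_contra! hcon
  have hp := h.hp
  have huc := h.hu.continuous
  obtain ⟨xs, hxs, hmax⟩ := (isCompact_closedBall (0 : Euc n) r).exists_isMaxOn
    ⟨0, mem_closedBall_self hr.le⟩ huc.continuousOn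
  set m := u xs with hm
  have hmle : ∀ x ∈ closedBall (0 : Euc n) r, u x ≤ m := fun x hx => hmax hx
  have hMm : sphMax u r < m := hcon.trans_le (hmle y (by simpa using hy))
  obtain ⟨k₀, hk1, hk2⟩ := exists_between hMm
  set S : Set (Euc n) := closedBall (0 : Euc n) r ∩ {x | k₀ ≤ u x} with hS
  have hSc : IsCompact S := (isCompact_closedBall (0 : Euc n) r).inter_right
    (isClosed_le continuous_const huc)
  have hSlt : ∀ x ∈ S, ‖x‖ < r := by
    intro x hx
    have h1 : ‖x‖ ≤ r := by simpa using hx.1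
    refine lt_of_le_of_ne h1 fun he => ?_
    have h2 := le_sphMax huc x
    rw [he] at h2
    have := hx.2
    simp only [mem_ofPred_eq] at this
    linarith
  have hxsS : xs ∈ S := ⟨hxs, hk2.le⟩
  obtain ⟨z, hz, hzmax⟩ := hSc.exists_isMaxOn ⟨xs, hxsS⟩ continuous_norm.continuousOn
  have hzr := hSlt z hz
  have hz0 := norm_nonneg z
  let B : ContDiffBump (0 : Euc n) := ⟨(‖z‖ + r) / 2, (‖z‖ + 3 * r) / 4, by linarith, by linarith⟩
  have hBs : tsupport B ⊆ ball (0 : Euc n) r := by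
    rw [B.tsupport_eq]
    exact closedBall_subset_ball (by change (‖z‖ + 3 * r) / 4 < r; linarith)
  have hB1 : ∀ x ∈ S, ∀ᶠ y in nhds x, B y = 1 := by
    intro x hx
    have : x ∈ ball (0 : Euc n) ((‖z‖ + r) / 2) := by
      rw [mem_ball_zero_iff]
      have : ‖x‖ ≤ ‖z‖ := hzmax hx
      linarith
    filter_upwards [isOpen_ball.mem_nhds this] with y hy
    exact B.one_of_mem_closedBall (ball_subset_closedBall hy)
  have hBC : ContDiff ℝ 1 B := B.contDiff
  -- bounds
  obtain ⟨G, hG⟩ := (isCompact_closedBall (0 : Euc n) r).exists_bound_of_continuousOn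
    h.fd_cont.continuousOn
  obtain ⟨β, hβ⟩ := h.hbL _ (isCompact_closedBall (0 : Euc n) r)
  have hG0 : 0 ≤ G := (norm_nonneg _).trans (hG 0 (mem_closedBall_self hr.le))
  have hβ0 : 0 ≤ β := (h.hb0 _).trans (hβ 0 (mem_closedBall_self hr.le))
  set Λ : ℝ := β * G ^ (α - p + 1) with hΛ
  have hα1 := h.hα₁
  have hΛ0 : 0 ≤ Λ := by positivity
  have hbb : ∀ x ∈ ball (0 : Euc n) r, b x * ‖fderiv ℝ u x‖ ^ α ≤ Λ * ‖fderiv ℝ u x‖ ^ (p - 1) := by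
    intro x hx
    have h1 := hβ x (ball_subset_closedBall hx)
    have h2 := hG x (ball_subset_closedBall hx)
    have e : ‖fderiv ℝ u x‖ ^ α = ‖fderiv ℝ u x‖ ^ (α - p + 1) * ‖fderiv ℝ u x‖ ^ (p - 1) := by
      rw [← Real.rpow_add_of_nonneg (norm_nonneg _) (by linarith) (by linarith)]; congr 1; ring
    have h3 : ‖fderiv ℝ u x‖ ^ (α - p + 1) ≤ G ^ (α - p + 1) :=
      Real.rpow_le_rpow (norm_nonneg _) h2 (by linarith)
    rw [e, hΛ, ← mul_assoc]
    gcongr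
  obtain ⟨K, hK, hgns⟩ := gns n hn
  have hn' : (2:ℝ) ≤ n := by exact_mod_cast hn
  set κ : ℝ := (n:ℝ) / (n - 1) with hκ
  have hκ1 : 1 < κ := by rw [hκ, lt_div_iff₀ (by linarith)]; linarith
  have hC₁ := h.hC₁
  set Cc : ℝ := (p + 1) * ((1 / C₁) ^ (p - 1) * Λ ^ p / C₁ + 1) with hCc
  have hCc0 : 0 < Cc := by positivity
  -- δ₀
  have hδ : ∃ δ : ℝ, 0 < δ ∧ (2 * δ) ^ (κ - 1) * (K * Cc ^ κ) < 1 / 2 := by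
    have t : Tendsto (fun δ : ℝ => (2 * δ) ^ (κ - 1) * (K * Cc ^ κ)) (nhds 0) (nhds 0) := by
      have c : Continuous (fun δ : ℝ => (2 * δ) ^ (κ - 1) * (K * Cc ^ κ)) :=
        ((continuous_const.mul continuous_id).rpow_const (fun _ => Or.inr (by linarith))).mul
          continuous_const
      have := c.tendsto 0
      simpa [Real.zero_rpow (by linarith : κ - 1 ≠ 0)] using this
    have hev := (t.eventually (gt_mem_nhds (by norm_num : (0:ℝ) < 1 / 2))).filter_mono
      (nhdsWithin_le_nhds (s := Ioi 0))
    obtain ⟨δ, h1, h2⟩ := (hev.and self_mem_nhdsWithin).exists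
    exact ⟨δ, h2, h1⟩
  obtain ⟨δ, hδ0, hδ1⟩ := hδ
  have htend := Emp_tendsto h.hu (r := r) (fun x hx => hmle x (ball_subset_closedBall hx)) hk2
  obtain ⟨j, hj⟩ := (htend.eventually (gt_mem_nhds hδ0)).exists
  set k := m - (m - k₀) / (j + 1) with hk
  have hkk : k₀ ≤ k := by
    have : (m - k₀) / (j + 1) ≤ m - k₀ := div_le_self (by linarith) (by
      have : (0:ℝ) ≤ j := Nat.cast_nonneg j
      linarith)
    linarith
  have hkm : k < m := by
    have : 0 < (m - k₀) / (j + 1) := div_pos (by linarith) (by positivity)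
    linarith
  have core := h.mp_core (k := k) hBC B.hasCompactSupport (fun x => B.nonneg) hBs (by
    intro x hx hkx
    have hxS : x ∈ S := ⟨ball_subset_closedBall hx, by simp only [mem_ofPred_eq]; linarith⟩
    have : (B : Euc n → ℝ) =ᶠ[nhds x] fun _ => 1 := hB1 x hxS
    rw [this.fderiv_eq]; simp) hΛ0 hbb
  rw [← hCc] at core
  set F : Euc n → ℝ := fun x => pp u k x ^ (p + 1) * B x with hF
  have hFC : ContDiff ℝ 1 F := (pp_pow_contDiff h.hu k (by linarith)).mul hBC
  have hFc : HasCompactSupport F := B.hasCompactSupport.mul_left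
  have hF0 : ∀ x, 0 ≤ F x := fun x => mul_nonneg (Real.rpow_nonneg (pp_nonneg _ _ _) _) B.nonneg
  have hFi : Integrable F := hFC.continuous.integrable_of_hasCompactSupport hFc
  have hFk : Continuous (fun x => F x ^ κ) :=
    hFC.continuous.rpow_const (fun _ => Or.inr (by linarith))
  have hFkc : HasCompactSupport (fun x => F x ^ κ) := by
    refine HasCompactSupport.intro hFc.isCompact fun x hx => ?_
    rw [image_eq_zero_of_notMem_tsupport hx, Real.zero_rpow (by linarith)]
  have hFki : Integrable (fun x => F x ^ κ) := hFk.integrable_of_hasCompactSupport hFkc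
  have G1 := hgns F hFC hFc hF0
  set E := Emp u r k with hE
  set I := ∫ x in E, F x with hI
  have hI0 : 0 ≤ I := integral_nonneg fun x => hF0 x
  have hJ : ∫ x, F x ^ κ ≤ K * (Cc * I) ^ κ := by
    refine G1.trans ?_
    have : 0 ≤ ∫ x, ‖fderiv ℝ F x‖ := integral_nonneg fun x => norm_nonneg _
    gcongr
  have hIz : I = 0 := by
    by_contra hne
    have hIp : 0 < I := lt_of_le_of_ne hI0 (Ne.symm hne)
    set c := I / (2 * δ) with hc
    have hc0 : 0 < c := by positivity
    have hEfin : volume E ≠ ∞ := ((measure_mono inter_subset_left).trans_lt measure_ball_lt_top).ne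
    have ic : IntegrableOn (fun _ : Euc n => c) E := integrableOn_const hEfin
    have h1 : I ≤ ∫ x in E, (c + c ^ (1 - κ) * F x ^ κ) := by
      refine setIntegral_mono hFi.integrableOn (ic.integrable.add (hFki.integrableOn.const_mul _))
        fun x => ?_
      have := pow_interp (hF0 x) hc0 one_pos hκ1.le
      simpa using this
    rw [integral_add ic.integrable (hFki.integrableOn.const_mul _), setIntegral_const, smul_eq_mul,
      integral_const_mul] at h1
    have h2 : ∫ x in E, F x ^ κ ≤ K * (Cc * I) ^ κ :=
      (setIntegral_le_integral hFki (Eventually.of_forall fun x => Real.rpow_nonneg (hF0 x) _)).trans hJ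
    have h3 : volume.real E * c ≤ I / 2 := by
      calc _ ≤ δ * c := by gcongr
        _ = I / 2 := by rw [hc]; field_simp
    have h4 : c ^ (1 - κ) * ∫ x in E, F x ^ κ ≤ c ^ (1 - κ) * (K * (Cc * I) ^ κ) := by gcongr
    have h5 : c ^ (1 - κ) * (K * (Cc * I) ^ κ) = I * ((2 * δ) ^ (κ - 1) * (K * Cc ^ κ)) := by
      rw [hc, Real.div_rpow hI0 (by positivity), Real.mul_rpow hCc0.le hI0]
      have e1 : ((2 * δ) ^ (1 - κ))⁻¹ = (2 * δ) ^ (κ - 1) := by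
        rw [← Real.rpow_neg (by positivity)]; congr 1; ring
      have e2 : I ^ (1 - κ) * I ^ κ = I := by
        rw [← Real.rpow_add hIp]; simp
      rw [div_eq_mul_inv, e1]
      calc _ = (I ^ (1 - κ) * I ^ κ) * ((2 * δ) ^ (κ - 1) * (K * Cc ^ κ)) := by ring
        _ = _ := by rw [e2]
    nlinarith
  rw [hIz, mul_zero, Real.zero_rpow (by linarith), mul_zero] at hJ
  have hpos : 0 < ∫ x, F x ^ κ := by
    refine hFk.integral_pos_of_hasCompactSupport_nonneg_nonzero hFkc
      (fun x => Real.rpow_nonneg (hF0 x) _) (x := xs) ?_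
    have : B xs = 1 := (hB1 xs hxsS).self_of_nhds
    have hpp : 0 < pp u k xs := by unfold pp; exact lt_max_of_lt_left (by linarith)
    simp only [hF]
    rw [this]
    positivity
  linarith


lemma exists_norm_eq_Euc {n : ℕ} (hn : 2 ≤ n) {r : ℝ} (hr : 0 ≤ r) : ∃ x : Euc n, ‖x‖ = r := by
  have : Nonempty (Fin n) := ⟨⟨0, by omega⟩⟩
  exact _root_.exists_norm_eq (Euc n) hr

lemma sphMax_attained {n : ℕ} (hn : 2 ≤ n) {u : Euc n → ℝ} (hu : Continuous u) {r : ℝ}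
    (hr : 0 ≤ r) : ∃ x : Euc n, ‖x‖ = r ∧ u x = sphMax u r := by
  obtain ⟨y, hy⟩ := exists_norm_eq_Euc hn hr
  have hne : (u '' sphere (0 : Euc n) r).Nonempty := ⟨u y, y, by simpa using hy, rfl⟩
  obtain ⟨x, hx, hxe⟩ := ((isCompact_sphere (0 : Euc n) r).image hu).sSup_mem hne
  exact ⟨x, by simpa using hx, hxe⟩

section
variable {n : ℕ} {A : Euc n → Euc n → Euc n} {p C₁ C₂ α : ℝ}
    {b q : Euc n → ℝ} {g : ℝ → ℝ} {u : Euc n → ℝ}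

lemma Sol.sphMax_mono (hn : 2 ≤ n) (h : Sol A p C₁ C₂ α b q g u) {r s : ℝ} (hr : 0 < r)
    (hrs : r ≤ s) : sphMax u r ≤ sphMax u s := by
  obtain ⟨x, hx, hxe⟩ := sphMax_attained hn h.hu.continuous hr.le
  rw [← hxe]
  exact h.max_princ hn (hr.trans_le hrs) (by rw [hx]; exact hrs)

end

/-- one growth step -/
lemma grow_step (n : ℕ) (hn : 2 ≤ n) {p C₁ C₂ α : ℝ} (hp : 1 < p) (hC₁ : 0 < C₁) (hC₂ : 0 < C₂)
    (hα₁ : p - 1 ≤ α) (hα₂ : α ≤ p) :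
    ∃ c : ℝ, 0 < c ∧ ∀ (A : Euc n → Euc n → Euc n) (b q : Euc n → ℝ) (g : ℝ → ℝ)
    (u : Euc n → ℝ), Sol A p C₁ C₂ α b q g u → ∀ (k₁ a β r δ : ℝ), 0 < r → 0 < δ →
    0 < a → 0 ≤ β → (∀ᵐ x, x ∈ Ann n (r - δ) (r + δ) → k₁ < u x → a ≤ q x * g (u x)) →
    (∀ᵐ x, x ∈ Ann n (r - δ) (r + δ) → b x ≤ β) →
    δ * a ^ ((α - p + 1) / α) * β ^ ((p - 1) / α) ≤ 1 → k₁ < sphMax u r →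
    Ysc a p c δ ≤ sphMax u (r + δ) - sphMax u r := by
  obtain ⟨c, hc, hnd⟩ := nondeg n hn hp hC₁ hC₂ hα₁ hα₂
  refine ⟨c, hc, ?_⟩
  intro A b q g u h k₁ a β r δ hr hδ ha hβ hq hb hcond hk
  by_contra! hcon
  obtain ⟨x₀, hx₀, hux⟩ := sphMax_attained hn h.hu.continuous hr.le
  obtain ⟨k, hk1, hk2⟩ := exists_between
    (max_lt hk (by linarith : sphMax u (r + δ) - Ysc a p c δ < sphMax u r))
  have hsub : ball x₀ δ ⊆ Ann n (r - δ) (r + δ) := by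
    intro x hx
    rw [mem_ball, dist_eq_norm] at hx
    have h1 := norm_sub_norm_le x x₀
    have h2 := norm_sub_norm_le x₀ x
    rw [norm_sub_rev] at h2
    constructor <;> linarith
  have := hnd A b q g u h k a β (sphMax u (r + δ) - k) x₀ δ hδ ha hβ
    (by
      filter_upwards [hq] with x hx h1 h2
      exact hx (hsub h1) ((lt_of_le_of_lt (le_max_left _ _) hk1).trans h2))
    (by filter_upwards [hb] with x hx h1 using hx (hsub h1))
    (by
      intro x hx
      have := h.max_princ hn (r := r + δ) (by linarith) (hsub hx).2.le
      linarith)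
    hcond (by rw [hux]; exact hk2)
  have := lt_of_le_of_lt (le_max_right _ _) hk1
  linarith

lemma grow_piece (n : ℕ) (hn : 2 ≤ n) {p C₁ C₂ α : ℝ} (hp : 1 < p) (hC₁ : 0 < C₁) (hC₂ : 0 < C₂)
    (hα₁ : p - 1 ≤ α) (hα₂ : α ≤ p) :
    ∃ c : ℝ, 0 < c ∧ ∀ (A : Euc n → Euc n → Euc n) (b q : Euc n → ℝ) (g : ℝ → ℝ)
    (u : Euc n → ℝ), Sol A p C₁ C₂ α b q g u → ∀ (k₁ a β ρ ρ' : ℝ), 0 < ρ → ρ < ρ' →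
    0 < a → 0 ≤ β → (∀ᵐ x, x ∈ Ann n ρ ρ' → k₁ < u x → a ≤ q x * g (u x)) →
    (∀ᵐ x, x ∈ Ann n ρ ρ' → b x ≤ β) → k₁ < sphMax u ρ →
    c * (ρ' - ρ) * (a * (ρ' - ρ) /
      (1 + (ρ' - ρ) * a ^ ((α - p + 1) / α) * β ^ ((p - 1) / α))) ^ (1 / (p - 1)) ≤
      sphMax u ρ' - sphMax u ρ := by
  obtain ⟨c, hc, hst⟩ := grow_step n hn hp hC₁ hC₂ hα₁ hα₂
  refine ⟨c / 2 * (1 / 2) ^ (1 / (p - 1)), by positivity, ?_⟩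
  intro A b q g u h k₁ a β ρ ρ' hρ hρρ ha hβ hq hb hk
  set l := ρ' - ρ with hl
  have hl0 : 0 < l := by linarith
  set W := l * a ^ ((α - p + 1) / α) * β ^ ((p - 1) / α) with hW
  have hW0 : 0 ≤ W := by positivity
  set N : ℕ := ⌊W⌋₊ + 1 with hN
  have hN1 : W < N := by rw [hN]; push_cast; exact Nat.lt_floor_add_one W
  have hN2 : (N:ℝ) ≤ 1 + W := by
    rw [hN]; push_cast; linarith [Nat.floor_le hW0]
  have hN0 : (1:ℝ) ≤ N := by rw [hN]; push_cast; linarith [Nat.cast_nonneg (α := ℝ) ⌊W⌋₊]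
  set δ := l / (2 * N) with hδ
  have hδ0 : 0 < δ := by positivity
  have hNδ : N * δ = l / 2 := by rw [hδ]; field_simp
  have hcond : δ * a ^ ((α - p + 1) / α) * β ^ ((p - 1) / α) ≤ 1 := by
    have e : δ * a ^ ((α - p + 1) / α) * β ^ ((p - 1) / α) = W / (2 * N) := by
      rw [hδ, hW]; ring
    rw [e, div_le_one (by linarith)]; linarith
  have hδl : δ ≤ l / 2 := by
    rw [← hNδ]; nlinarith
  have it : ∀ i : ℕ, i ≤ N → i * Ysc a p c δ ≤ sphMax u (ρ + l / 2 + i * δ) - sphMax u (ρ + l / 2) := by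
    intro i
    induction i with
    | zero => intro _; simp
    | succ i ih =>
      intro hi
      have ih' := ih (by omega)
      have hiN : (i:ℝ) + 1 ≤ N := by exact_mod_cast hi
      have hid : (i + 1) * δ ≤ l / 2 := by rw [← hNδ]; gcongr
      have hi0 : 0 ≤ (i:ℝ) * δ := by positivity
      have hsub : Ann n (ρ + l / 2 + i * δ - δ) (ρ + l / 2 + i * δ + δ) ⊆ Ann n ρ ρ' := by
        intro x hx
        exact ⟨by linarith [hx.1], by linarith [hx.2]⟩
      have hs := hst A b q g u h k₁ a β (ρ + l / 2 + i * δ) δ (by linarith) hδ0 ha hβ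
        (by filter_upwards [hq] with x hx h1 using hx (hsub h1))
        (by filter_upwards [hb] with x hx h1 using hx (hsub h1)) hcond
        (hk.trans_le (h.sphMax_mono hn hρ (by linarith)))
      have e : ρ + l / 2 + ((i + 1 : ℕ):ℝ) * δ = ρ + l / 2 + i * δ + δ := by push_cast; ring
      rw [e]; push_cast
      linarith
  have hfin := it N le_rfl
  have e1 : ρ + l / 2 + N * δ = ρ' := by rw [hNδ]; linarith
  rw [e1] at hfin
  have hm := h.sphMax_mono hn hρ (by linarith : ρ ≤ ρ + l / 2)
  refine le_trans ?_ (hfin.trans (by linarith))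
  have hp1 : 0 < p - 1 := by linarith
  have e2 : Ysc a p c δ = c * (δ * (a * δ) ^ (1 / (p - 1))) := by
    unfold Ysc
    rw [Real.mul_rpow ha.le (by positivity), ← Real.rpow_mul hδ0.le, Real.mul_rpow ha.le hδ0.le]
    have : δ ^ (p * (1 / (p - 1))) = δ * δ ^ (1 / (p - 1)) := by
      rw [← Real.rpow_one_add' hδ0.le (by positivity)]; congr 1; field_simp; ring
    rw [this]; ring
  have e3 : N * Ysc a p c δ = c * (l / 2) * (a * δ) ^ (1 / (p - 1)) := by
    rw [e2, ← hNδ]; ring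
  rw [e3]
  have h4 : 1 / 2 * (a * l / (1 + W)) ≤ a * δ := by
    rw [hδ]
    have : a * l / (1 + W) ≤ a * l / N := by gcongr
    calc _ ≤ 1 / 2 * (a * l / N) := by gcongr
      _ = _ := by field_simp
  have h5 : (1 / 2 * (a * l / (1 + W))) ^ (1 / (p - 1)) ≤ (a * δ) ^ (1 / (p - 1)) :=
    Real.rpow_le_rpow (by positivity) h4 (by positivity)
  rw [Real.mul_rpow (by norm_num) (by positivity)] at h5
  calc _ = c * (l / 2) * ((1 / 2) ^ (1 / (p - 1)) * (a * l / (1 + W)) ^ (1 / (p - 1))) := by ring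
    _ ≤ _ := by gcongr

lemma Ann_meas (n : ℕ) (r s : ℝ) : MeasurableSet (Ann n r s) :=
  ((isOpen_lt continuous_const continuous_norm).inter
    (isOpen_lt continuous_norm continuous_const)).measurableSet

lemma Ann_ne {n : ℕ} (hn : 2 ≤ n) {r s t : ℝ} (ht : 0 ≤ t) (h1 : r < t) (h2 : t < s) :
    volume.restrict (Ann n r s) ≠ 0 := by
  have ho : IsOpen (Ann n r s) := ((isOpen_lt continuous_const continuous_norm).inter
    (isOpen_lt continuous_norm continuous_const))
  obtain ⟨x, hx⟩ := exists_norm_eq_Euc hn ht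
  have hne : (Ann n r s).Nonempty := ⟨x, by constructor <;> rw [hx] <;> assumption⟩
  have := ho.measure_pos volume hne
  rw [Ne, Measure.restrict_eq_zero]
  exact this.ne'

section
variable {n : ℕ} {A : Euc n → Euc n → Euc n} {p C₁ C₂ α : ℝ}
    {b q : Euc n → ℝ} {g : ℝ → ℝ} {u : Euc n → ℝ}

lemma Sol.qinf_nonneg (h : Sol A p C₁ C₂ α b q g u) (σ r : ℝ) : 0 ≤ qinf q σ r := by
  unfold qinf essInf liminf limsInf
  refine Real.sSup_nonneg' ⟨0, ?_, le_rfl⟩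
  rw [mem_ofPred_eq, eventually_map]
  exact Eventually.of_forall fun x => h.hq0 x

lemma Sol.qinf_le (h : Sol A p C₁ C₂ α b q g u) (σ r : ℝ) :
    ∀ᵐ x, x ∈ Ann n (r / σ) (σ * r) → qinf q σ r ≤ q x := by
  rw [← ae_restrict_iff' (Ann_meas n _ _)]
  unfold qinf
  refine ae_essInf_le ⟨0, ?_⟩
  rw [eventually_map]
  exact Eventually.of_forall fun x => h.hq0 x

lemma Sol.bsup_le (h : Sol A p C₁ C₂ α b q g u) (σ r : ℝ) :
    ∀ᵐ x, x ∈ Ann n (r / σ) (σ * r) → b x ^ ((p - 1) / α) ≤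
      essSup (fun x => b x ^ ((p - 1) / α)) (volume.restrict (Ann n (r / σ) (σ * r))) := by
  rw [← ae_restrict_iff' (Ann_meas n _ _)]
  obtain ⟨β, hβ⟩ := h.hbL _ (isCompact_closedBall (0 : Euc n) (σ * r))
  refine ae_le_essSup ⟨β ^ ((p - 1) / α), ?_⟩
  have hα := h.α_pos
  have hp := h.hp
  have : ∀ᵐ x ∂(volume.restrict (Ann n (r / σ) (σ * r))), b x ^ ((p - 1) / α) ≤ β ^ ((p - 1) / α) := by
    rw [ae_restrict_iff' (Ann_meas n _ _)]
    refine Eventually.of_forall fun x hx => ?_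
    exact Real.rpow_le_rpow (h.hb0 x) (hβ x (by simpa using hx.2.le))
      (div_nonneg (by linarith) hα.le)
  simpa [eventually_map] using this

lemma Sol.bsup_nonneg (hn : 2 ≤ n) (h : Sol A p C₁ C₂ α b q g u) {σ r : ℝ} (hσ : 1 < σ) (hr : 0 < r) :
    0 ≤ essSup (fun x => b x ^ ((p - 1) / α)) (volume.restrict (Ann n (r / σ) (σ * r))) := by
  have hne := Ann_ne hn hr.le (div_lt_self hr hσ) (by nlinarith : r < σ * r)
  have : (ae (volume.restrict (Ann n (r / σ) (σ * r)))).NeBot := ae_neBot.2 hne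
  have := (ae_restrict_iff' (Ann_meas n _ _)).2 (h.bsup_le σ r)
  obtain ⟨x, hx⟩ := this.exists
  exact (Real.rpow_nonneg (h.hb0 x) _).trans hx

lemma Sol.fdef_nonneg (hn : 2 ≤ n) (h : Sol A p C₁ C₂ α b q g u) {σ r : ℝ} (hσ : 1 < σ)
    (hr : 0 < r) : 0 ≤ fdef q b p α σ r := by
  unfold fdef
  have h1 := h.qinf_nonneg σ r
  have h2 := h.bsup_nonneg hn hσ hr
  positivity
end

lemma alg_f {p α γ ν Q B ξ : ℝ} (hp : 1 < p) (hα₁ : p - 1 ≤ α) (hγ : 0 < γ) (hQ : 0 < Q)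
    (hB : 0 ≤ B) (hξ : 0 < ξ)
    (hν : (1 ≤ γ ∧ ν = 1 / α) ∨ (γ ≤ 1 ∧ ν = 1 / (p - 1))) :
    γ ^ (ν * (p - 1)) * (Q / (1 + ξ * Q ^ ((α - p + 1) / α) * B)) ≤
      Q * γ / (1 + ξ * (Q * γ) ^ ((α - p + 1) / α) * B) := by
  have hα : 0 < α := by linarith
  have he : 0 ≤ (α - p + 1) / α := div_nonneg (by linarith) hα.le
  set e := (α - p + 1) / α with hed
  have hp1 : p - 1 ≠ 0 := by linarith
  rw [Real.mul_rpow hQ.le hγ.le, mul_div_assoc', div_le_div_iff₀ (by positivity) (by positivity)]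
  set X := ξ * Q ^ e * B with hX
  have hX0 : 0 ≤ X := by positivity
  have eX : ξ * (Q ^ e * γ ^ e) * B = γ ^ e * X := by rw [hX]; ring
  rw [eX]
  rcases hν with ⟨h1, h2⟩ | ⟨h1, h2⟩
  · have e1 : γ = γ ^ (ν * (p - 1)) * γ ^ e := by
      rw [← Real.rpow_add hγ, h2, hed]
      have : 1 / α * (p - 1) + (α - p + 1) / α = 1 := by field_simp; ring
      rw [this, Real.rpow_one]
    have hge : 1 ≤ γ ^ e := Real.one_le_rpow h1 he
    calc γ ^ (ν * (p - 1)) * Q * (1 + γ ^ e * X) ≤ γ ^ (ν * (p - 1)) * Q * (γ ^ e + γ ^ e * X) := by gcongr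
      _ = Q * (γ ^ (ν * (p - 1)) * γ ^ e) * (1 + X) := by ring
      _ = _ := by rw [← e1]
  · rw [h2, one_div_mul_cancel hp1, Real.rpow_one]
    have hge : γ ^ e ≤ 1 := Real.rpow_le_one hγ.le h1 he
    calc γ * Q * (1 + γ ^ e * X) ≤ γ * Q * (1 + 1 * X) := by gcongr
      _ = _ := by ring

lemma piece_lemma (n : ℕ) (hn : 2 ≤ n) {p C₁ C₂ α τ : ℝ} (hp : 1 < p) (hC₁ : 0 < C₁) (hC₂ : 0 < C₂)
    (hα₁ : p - 1 ≤ α) (hα₂ : α ≤ p) (hτ : 1 < τ) :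
    ∃ c : ℝ, 0 < c ∧ ∀ (A : Euc n → Euc n → Euc n) (b q : Euc n → ℝ) (g : ℝ → ℝ)
    (u : Euc n → ℝ), Sol A p C₁ C₂ α b q g u → ∀ (k₁ γ ν ρ ρ' : ℝ), 0 < ρ →
    τ ^ (1 / 4 : ℝ) * ρ ≤ ρ' → ρ' ≤ τ ^ (1 / 2 : ℝ) * ρ → 0 < γ →
    ((1 ≤ γ ∧ ν = 1 / α) ∨ (γ ≤ 1 ∧ ν = 1 / (p - 1))) →
    (∀ t, k₁ < t → t ≤ sphMax u ρ' → γ ≤ g t) → k₁ < sphMax u ρ →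
    ∀ ξ ∈ Ioc ρ ρ', c * (ρ' - ρ) * γ ^ ν * (ξ * fdef q b p α τ ξ) ^ (1 / (p - 1)) ≤
      sphMax u ρ' - sphMax u ρ := by
  obtain ⟨c, hc, hgp⟩ := grow_piece n hn hp hC₁ hC₂ hα₁ hα₂
  have hτ4 : 1 < τ ^ (1 / 4 : ℝ) := Real.one_lt_rpow hτ (by norm_num)
  have hτ2 : τ ^ (1 / 2 : ℝ) ≤ τ := by
    conv_rhs => rw [← Real.rpow_one τ]
    exact Real.rpow_le_rpow_of_exponent_le hτ.le (by norm_num)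
  have hτ0 : 0 < τ := by linarith
  set c₁ : ℝ := (τ ^ (1 / 4 : ℝ) - 1) / τ with hc₁
  have hc₁0 : 0 < c₁ := div_pos (by linarith) hτ0
  refine ⟨c * (c₁ / τ) ^ (1 / (p - 1)), by positivity, ?_⟩
  intro A b q g u h k₁ γ ν ρ ρ' hρ hρ1 hρ2 hγ hν hg hk ξ hξ
  have hρρ : ρ < ρ' := by nlinarith
  have hξ0 : 0 < ξ := hρ.trans hξ.1
  have hα : 0 < α := by linarith
  have hp1 : 0 < p - 1 := by linarith
  have hQ := h.qinf_nonneg τ ξ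
  have hB := h.bsup_nonneg hn hτ hξ0
  have hqle := h.qinf_le τ ξ
  have hble := h.bsup_le τ ξ
  unfold fdef
  set Q := qinf q τ ξ with hQd
  set B := essSup (fun x => b x ^ ((p - 1) / α)) (volume.restrict (Ann n (ξ / τ) (τ * ξ))) with hBd
  rcases hQ.eq_or_lt with hQ0 | hQ0
  · rw [← hQ0, zero_div, mul_zero, Real.zero_rpow (by positivity), mul_zero]
    linarith [h.sphMax_mono hn hρ hρρ.le]
  have hsub : Ann n ρ ρ' ⊆ Ann n (ξ / τ) (τ * ξ) := by
    intro x hx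
    constructor
    · refine lt_of_le_of_lt ?_ hx.1
      rw [div_le_iff₀ hτ0]
      nlinarith [hξ.2]
    · refine hx.2.trans_le ?_
      nlinarith [hξ.1]
  set β := B ^ (α / (p - 1)) with hβ
  have hβB : β ^ ((p - 1) / α) = B := by
    rw [hβ, ← Real.rpow_mul hB]
    have : α / (p - 1) * ((p - 1) / α) = 1 := by field_simp
    rw [this, Real.rpow_one]
  have key := hgp A b q g u h k₁ (Q * γ) β ρ ρ' hρ hρρ (by positivity) (by positivity)
    (by
      filter_upwards [hqle] with x hx h1 h2
      have h3 := hg (u x) h2 (h.max_princ hn (hρ.trans hρρ) h1.2.le)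
      have := hx (hsub h1)
      have := h.hq0 x
      gcongr)
    (by
      filter_upwards [hble] with x hx h1
      have h2 := hx (hsub h1)
      have h3 := Real.rpow_le_rpow (Real.rpow_nonneg (h.hb0 x) _) h2
        (by positivity : 0 ≤ α / (p - 1))
      rw [← Real.rpow_mul (h.hb0 x)] at h3
      have : (p - 1) / α * (α / (p - 1)) = 1 := by field_simp
      rwa [this, Real.rpow_one] at h3) hk
  rw [hβB] at key
  refine le_trans ?_ key
  set l := ρ' - ρ with hl
  have hl0 : 0 < l := by linarith
  have hl1 : c₁ * ξ ≤ l := by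
    have : ξ / τ ≤ ρ := by
      rw [div_le_iff₀ hτ0]; nlinarith [hξ.2]
    calc c₁ * ξ = (τ ^ (1 / 4 : ℝ) - 1) * (ξ / τ) := by rw [hc₁]; ring
      _ ≤ (τ ^ (1 / 4 : ℝ) - 1) * ρ := by
        have : 0 ≤ τ ^ (1 / 4 : ℝ) - 1 := by linarith
        gcongr
      _ ≤ l := by rw [hl]; linarith
  have hl2 : l ≤ τ * ξ := by nlinarith [hξ.1]
  have haf := alg_f hp hα₁ hγ hQ0 hB hξ0 hν
  set e := (α - p + 1) / α with he
  set f := Q / (1 + ξ * Q ^ e * B) with hf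
  have hf0 : 0 ≤ f := by positivity
  set X := (Q * γ) ^ e * B with hX
  have hX0 : 0 ≤ X := by positivity
  have hmain : (c₁ / τ) * (γ ^ (ν * (p - 1)) * (ξ * f)) ≤ Q * γ * l / (1 + l * (Q * γ) ^ e * B) := by
    have i1 : Q * γ * (c₁ * ξ) / (τ * (1 + ξ * X)) ≤ Q * γ * l / (1 + l * X) := by
      gcongr
      nlinarith
    have e1 : l * (Q * γ) ^ e * B = l * X := by rw [hX]; ring
    have e2 : ξ * (Q * γ) ^ e * B = ξ * X := by rw [hX]; ring
    rw [e2] at haf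
    rw [e1]
    refine le_trans ?_ i1
    calc (c₁ / τ) * (γ ^ (ν * (p - 1)) * (ξ * f)) = (c₁ / τ * ξ) * (γ ^ (ν * (p - 1)) * f) := by ring
      _ ≤ (c₁ / τ * ξ) * (Q * γ / (1 + ξ * X)) := by gcongr
      _ = _ := by field_simp
  have h6 := Real.rpow_le_rpow (by positivity) hmain (by positivity : 0 ≤ 1 / (p - 1))
  rw [Real.mul_rpow (by positivity) (by positivity), Real.mul_rpow (by positivity) (by positivity),
    ← Real.rpow_mul hγ.le] at h6
  have e7 : ν * (p - 1) * (1 / (p - 1)) = ν := by field_simp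
  rw [e7] at h6
  calc _ = c * l * ((c₁ / τ) ^ (1 / (p - 1)) * (γ ^ ν * (ξ * f) ^ (1 / (p - 1)))) := by ring
    _ ≤ _ := by gcongr


lemma ginf_lower {g : ℝ → ℝ} (hg : ContinuousOn g (Ici 0)) (hg0 : ∀ t ∈ Ici (0:ℝ), 0 ≤ g t)
    (hgp : ∀ t : ℝ, 0 < t → 0 < g t) {η M₁ M₂ γ e : ℝ} (hη : 1 < η) (hM : 0 < M₁) (hMM : M₁ ≤ M₂)
    (hγ : 0 < γ) (he : 0 < e)
    (hγle : ∀ t ∈ Ioc M₁ M₂, ∃ s ∈ Ioo (t / η) (η * t), g s = γ) :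
    (M₂ - M₁) * γ ^ (-e) ≤ ∫ t in Ioc M₁ M₂, ginf g η t ^ (-e) := by
  have hη0 : 0 < η := by linarith
  have hbdd : ∀ t, 0 < t → BddBelow (g '' Ioo (t / η) (η * t)) := by
    intro t ht
    refine ⟨0, ?_⟩
    rintro _ ⟨s, hs, rfl⟩
    exact hg0 s (mem_Ici.2 ((div_pos ht hη0).trans hs.1).le)
  have hne : ∀ t, 0 < t → (g '' Ioo (t / η) (η * t)).Nonempty := by
    intro t ht
    exact ⟨g t, t, ⟨div_lt_self ht hη, by nlinarith⟩, rfl⟩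
  have hup : ∀ t ∈ Ioc M₁ M₂, ginf g η t ≤ γ := by
    intro t ht
    obtain ⟨s, hs, hsγ⟩ := hγle t ht
    rw [← hsγ]
    exact csInf_le (hbdd t (hM.trans ht.1)) ⟨s, hs, rfl⟩
  obtain ⟨s₀, hs₀, hmin⟩ := (isCompact_Icc (a := M₁ / η) (b := η * M₂)).exists_isMinOn
    ⟨M₁, (div_lt_self hM hη).le, by nlinarith⟩
    (hg.mono fun t ht => mem_Ici.2 ((div_pos hM hη0).le.trans ht.1))
  set γ₀ := g s₀ with hγ₀
  have hγ₀0 : 0 < γ₀ := hgp s₀ ((div_pos hM hη0).trans_le hs₀.1)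
  have hlow : ∀ t ∈ Ioc M₁ M₂, γ₀ ≤ ginf g η t := by
    intro t ht
    refine le_csInf (hne t (hM.trans ht.1)) ?_
    rintro _ ⟨s, hs, rfl⟩
    refine hmin ⟨?_, ?_⟩
    · refine le_trans ?_ hs.1.le
      have := ht.1
      gcongr
    · refine hs.2.le.trans ?_
      have := ht.2
      gcongr
  have hmeas : AEMeasurable (ginf g η) (volume.restrict (Ioc M₁ M₂)) := by
    apply aemeasurable_restrict_of_measurable_subtype measurableSet_Ioc
    apply measurable_of_Iio
    intro c
    apply IsOpen.measurableSet
    have e1 : (fun x : Ioc M₁ M₂ => ginf g η x) ⁻¹' Iio c =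
        Subtype.val ⁻¹' (⋃ s ∈ {s : ℝ | g s < c}, {t : ℝ | t / η < s ∧ s < η * t}) := by
      ext ⟨t, ht⟩
      simp only [mem_preimage, mem_Iio, mem_iUnion, ginf,
        csInf_lt_iff (hbdd t (hM.trans ht.1)) (hne t (hM.trans ht.1))]
      constructor
      · rintro ⟨_, ⟨s, hs, rfl⟩, hsc⟩
        exact ⟨s, hsc, hs⟩
      · rintro ⟨s, hsc, hs⟩
        exact ⟨_, ⟨s, hs, rfl⟩, hsc⟩
    rw [e1]
    refine IsOpen.preimage continuous_subtype_val (isOpen_biUnion fun s _ => ?_)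
    exact (isOpen_lt (continuous_id.div_const η) continuous_const).inter
      (isOpen_lt continuous_const (continuous_const.mul continuous_id))
  have hfin : volume (Ioc M₁ M₂) ≠ ∞ := measure_Ioc_lt_top.ne
  have hIntegr : IntegrableOn (fun t => ginf g η t ^ (-e)) (Ioc M₁ M₂) := by
    refine Integrable.mono' (g := fun _ => γ₀ ^ (-e)) (integrableOn_const hfin)
      (hmeas.pow_const _).aestronglyMeasurable ?_
    rw [ae_restrict_iff' measurableSet_Ioc]
    refine Eventually.of_forall fun t ht => ?_
    have h1 := hlow t ht
    rw [Real.norm_of_nonneg (Real.rpow_nonneg (hγ₀0.le.trans h1) _)]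
    exact Real.rpow_le_rpow_of_nonpos hγ₀0 h1 (by linarith)
  have e2 : (M₂ - M₁) * γ ^ (-e) = ∫ t in Ioc M₁ M₂, γ ^ (-e) := by
    rw [setIntegral_const, smul_eq_mul, Real.volume_real_Ioc_of_le hMM]
  rw [e2]
  refine setIntegral_mono_on (integrableOn_const hfin) hIntegr measurableSet_Ioc fun t ht => ?_
  exact Real.rpow_le_rpow_of_nonpos (hγ₀0.trans_le (hlow t ht)) (hup t ht) (by linarith)

lemma exists_ratio {τ r₁ r₂ : ℝ} (hτ : 1 < τ) (hr₁ : 0 < r₁) (h : τ ^ (1 / 2 : ℝ) * r₁ ≤ r₂) :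
    ∃ (l : ℝ) (N : ℕ), τ ^ (1 / 4 : ℝ) ≤ l ∧ l ≤ τ ^ (1 / 2 : ℝ) ∧ r₁ * l ^ N = r₂ := by
  have hτ0 : 0 < τ := by linarith
  have hr₂ : 0 < r₂ := lt_of_lt_of_le (by positivity) h
  have hL : 0 < Real.log τ := Real.log_pos hτ
  set L := Real.log (r₂ / r₁) / Real.log τ with hLd
  have hτL : τ ^ L = r₂ / r₁ := by
    rw [Real.rpow_def_of_pos hτ0, hLd, mul_div_cancel₀ _ hL.ne', Real.exp_log (by positivity)]
  have hL2 : 1 / 2 ≤ L := by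
    have : τ ^ (1 / 2 : ℝ) ≤ τ ^ L := by rw [hτL, le_div_iff₀ hr₁]; exact h
    exact (Real.rpow_le_rpow_left_iff hτ).1 this
  set N := ⌈2 * L⌉₊ with hN
  have hN1 : 2 * L ≤ N := Nat.le_ceil _
  have hN2 : (N:ℝ) < 2 * L + 1 := Nat.ceil_lt_add_one (by linarith)
  have hN0 : (0:ℝ) < N := by linarith
  refine ⟨τ ^ (L / N), N, ?_, ?_, ?_⟩
  · apply Real.rpow_le_rpow_of_exponent_le hτ.le
    rw [le_div_iff₀ hN0]; linarith
  · apply Real.rpow_le_rpow_of_exponent_le hτ.le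
    rw [div_le_iff₀ hN0]; linarith
  · rw [← Real.rpow_natCast, ← Real.rpow_mul hτ0.le, div_mul_cancel₀ _ hN0.ne', hτL]
    field_simp

lemma stmt_aux (n : ℕ) (hn : 2 ≤ n) (p C₁ C₂ α : ℝ) (hp : 1 < p)
    (hC₁ : 0 < C₁) (hC₂ : 0 < C₂) (hα₁ : p - 1 ≤ α) (hα₂ : α ≤ p)
    (η τ : ℝ) (hη : 1 < η) (hτ : 1 < τ) :
    ∃ C : ℝ, 0 < C ∧
      ∀ (A : Euc n → Euc n → Euc n) (b q : Euc n → ℝ) (g : ℝ → ℝ) (u : Euc n → ℝ),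
      Sol A p C₁ C₂ α b q g u →
      ∀ r₁ r₂ : ℝ, 0 < r₁ → r₁ < r₂ → τ ^ (1 / 2 : ℝ) * r₁ ≤ r₂ →
        0 < sphMax u r₂ → sphMax u r₂ ≤ η ^ (1 / 2 : ℝ) * sphMax u r₁ →
        (C * ∫ ξ in Set.Ioc r₁ r₂, (ξ * fdef q b p α τ ξ) ^ (1 / (p - 1))) ≤
            ∫ t in Set.Ioc (sphMax u r₁) (sphMax u r₂), ginf g η t ^ (-(1 / α)) ∨
          (C * ∫ ξ in Set.Ioc r₁ r₂, (ξ * fdef q b p α τ ξ) ^ (1 / (p - 1))) ≤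
            ∫ t in Set.Ioc (sphMax u r₁) (sphMax u r₂), ginf g η t ^ (-(1 / (p - 1))) := by
  obtain ⟨c, hc, hpiece⟩ := piece_lemma n hn hp hC₁ hC₂ hα₁ hα₂ hτ
  refine ⟨c, hc, ?_⟩
  intro A b q g u h r₁ r₂ hr₁ hr12 hττ hM2 hMM
  set M₁ := sphMax u r₁ with hM₁d
  set M₂ := sphMax u r₂ with hM₂d
  have hη0 : 0 < η := by linarith
  have hα : 0 < α := by linarith
  have hp1 : 0 < p - 1 := by linarith
  have hM12 : M₁ ≤ M₂ := h.sphMax_mono hn hr₁ hr12.le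
  have hη2 : 0 < η ^ (1 / 2 : ℝ) := by positivity
  have hM1 : 0 < M₁ := by
    by_contra! hc
    have : η ^ (1 / 2 : ℝ) * M₁ ≤ 0 := mul_nonpos_of_nonneg_of_nonpos hη2.le hc
    linarith
  have hη24 : η ^ (1 / 2 : ℝ) < η ^ (3 / 4 : ℝ) :=
    Real.rpow_lt_rpow_of_exponent_lt hη (by norm_num)
  have hη34 : η ^ (3 / 4 : ℝ) < η := by
    conv_rhs => rw [← Real.rpow_one η]
    exact Real.rpow_lt_rpow_of_exponent_lt hη (by norm_num)
  have hη1 : 1 < η ^ (3 / 4 : ℝ) := Real.one_lt_rpow hη (by norm_num)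
  have hηp : 0 < η ^ (3 / 4 : ℝ) := by positivity
  set k₁ := M₂ / η ^ (3 / 4 : ℝ) with hk₁
  have hk₁0 : 0 < k₁ := by positivity
  have hk₁M : k₁ < M₁ := by
    rw [hk₁, div_lt_iff₀ hηp]; nlinarith
  obtain ⟨ts, hts, hmin⟩ := (isCompact_Icc (a := k₁) (b := M₂)).exists_isMinOn
    ⟨M₂, (hk₁M.trans_le hM12).le, le_rfl⟩
    (h.hg.mono fun t ht => mem_Ici.2 (hk₁0.le.trans ht.1))
  set γ := g ts with hγd
  have hγ : 0 < γ := h.hgp ts (hk₁0.trans_le hts.1)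
  have hγle : ∀ t ∈ Ioc M₁ M₂, ∃ s ∈ Ioo (t / η) (η * t), g s = γ := by
    intro t ht
    refine ⟨ts, ⟨lt_of_lt_of_le ?_ hts.1, lt_of_le_of_lt hts.2 ?_⟩, rfl⟩
    · calc t / η ≤ M₂ / η := by have := ht.2
                                gcongr
        _ < k₁ := by rw [hk₁]; gcongr
    · have := ht.1
      calc M₂ ≤ η ^ (1 / 2 : ℝ) * M₁ := hMM
        _ < η * t := by gcongr; linarith
  have hmain : ∀ ν : ℝ, 0 < ν → ((1 ≤ γ ∧ ν = 1 / α) ∨ (γ ≤ 1 ∧ ν = 1 / (p - 1))) →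
      (c * ∫ ξ in Set.Ioc r₁ r₂, (ξ * fdef q b p α τ ξ) ^ (1 / (p - 1))) ≤
            ∫ t in Set.Ioc M₁ M₂, ginf g η t ^ (-ν) := by
    intro ν hν0 hν
    refine le_trans ?_ (ginf_lower h.hg h.hg0 h.hgp hη hM1 hM12 hγ hν0 hγle)
    set F : ℝ → ℝ := fun ξ => (ξ * fdef q b p α τ ξ) ^ (1 / (p - 1)) with hF
    have hR0 : 0 ≤ (M₂ - M₁) * γ ^ (-ν) := mul_nonneg (by linarith) (by positivity)
    by_cases hFi : IntegrableOn F (Ioc r₁ r₂)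
    swap
    · rw [integral_undef hFi, mul_zero]; exact hR0
    obtain ⟨l, N, hl1, hl2, hlN⟩ := exists_ratio hτ hr₁ hττ
    have hl : 1 < l := (Real.one_lt_rpow hτ (by norm_num)).trans_le hl1
    have hmono : ∀ i j : ℕ, i ≤ j → r₁ * l ^ i ≤ r₁ * l ^ j := by
      intro i j hij
      have := pow_le_pow_right₀ hl.le hij
      gcongr
    have it : ∀ i : ℕ, i ≤ N → c * ∫ ξ in Ioc r₁ (r₁ * l ^ i), F ξ ≤
        (sphMax u (r₁ * l ^ i) - M₁) * γ ^ (-ν) := by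
      intro i
      induction i with
      | zero => intro _; simp [hM₁d]
      | succ i ih =>
        intro hi
        have ih' := ih (by omega)
        set ρ := r₁ * l ^ i with hρ
        have hρ0 : 0 < ρ := by positivity
        have eρ : r₁ * l ^ (i + 1) = l * ρ := by rw [hρ, pow_succ]; ring
        have hr1ρ : r₁ ≤ ρ := by simpa using hmono 0 i (by omega)
        have hρρ' : ρ ≤ l * ρ := by nlinarith
        have hρr2 : l * ρ ≤ r₂ := by rw [← eρ, ← hlN]; exact hmono _ _ hi
        rw [eρ]
        have i1 : IntegrableOn F (Ioc r₁ ρ) := hFi.mono_set (Ioc_subset_Ioc le_rfl (hρρ'.trans hρr2))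
        have i2 : IntegrableOn F (Ioc ρ (l * ρ)) := hFi.mono_set (Ioc_subset_Ioc hr1ρ hρr2)
        rw [← Ioc_union_Ioc_eq_Ioc hr1ρ hρρ', setIntegral_union (Ioc_disjoint_Ioc_of_le le_rfl)
          measurableSet_Ioc i1 i2, mul_add]
        have hp := hpiece A b q g u h k₁ γ ν ρ (l * ρ) hρ0 (by gcongr) (by gcongr) hγ hν
          (fun t ht1 ht2 => hmin ⟨ht1.le, ht2.trans (h.sphMax_mono hn (by positivity) hρr2)⟩)
          (hk₁M.trans_le (h.sphMax_mono hn hr₁ hr1ρ))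
        set Δ := sphMax u (l * ρ) - sphMax u ρ with hΔ
        have hgν : 0 < γ ^ ν := by positivity
        have hlρ : 0 < l * ρ - ρ := by nlinarith
        have i3 : ∫ ξ in Ioc ρ (l * ρ), F ξ ≤ ∫ ξ in Ioc ρ (l * ρ), Δ / (c * (l * ρ - ρ) * γ ^ ν) := by
          refine setIntegral_mono_on i2 (integrableOn_const measure_Ioc_lt_top.ne) measurableSet_Ioc
            fun ξ hξ => ?_
          rw [le_div_iff₀ (by positivity), mul_comm]
          exact hp ξ hξ
        rw [setIntegral_const, smul_eq_mul, Real.volume_real_Ioc_of_le hρρ'] at i3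
        have i4 : c * ∫ ξ in Ioc ρ (l * ρ), F ξ ≤ Δ * γ ^ (-ν) := by
          calc _ ≤ c * ((l * ρ - ρ) * (Δ / (c * (l * ρ - ρ) * γ ^ ν))) := by gcongr
            _ = _ := by
              rw [Real.rpow_neg hγ.le]
              have hne : l * ρ - ρ ≠ 0 := hlρ.ne'
              clear_value Δ
              generalize l * ρ - ρ = w at hne ⊢
              field_simp
        calc _ ≤ (sphMax u ρ - M₁) * γ ^ (-ν) + Δ * γ ^ (-ν) := add_le_add ih' i4
          _ = _ := by rw [hΔ]; ring
    have := it N le_rfl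
    rwa [hlN] at this
  rcases le_total 1 γ with h1 | h1
  · exact Or.inl (hmain (1 / α) (by positivity) (Or.inl ⟨h1, rfl⟩))
  · exact Or.inr (hmain (1 / (p - 1)) (by positivity) (Or.inr ⟨h1, rfl⟩))


/-- Lemma 3.4: dichotomy estimate on annuli `τ^{1/2} r₁ ≤ r₂` when `M` grows at most by the
factor `η^{1/2}`. -/
theorem stmt_7 (n : ℕ) (hn : 2 ≤ n) (p C₁ C₂ α : ℝ) (hp : 1 < p)
    (hC₁ : 0 < C₁) (hC₂ : 0 < C₂) (hα₁ : p - 1 ≤ α) (hα₂ : α ≤ p)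
    (η τ : ℝ) (hη : 1 < η) (hτ : 1 < τ) :
    ∃ C : ℝ, 0 < C ∧
      ∀ (A : Euc n → Euc n → Euc n), StructCond A p C₁ C₂ →
      ∀ (b : Euc n → ℝ), Measurable b → (∀ x, 0 ≤ b x) → LocBdd b →
      ∀ (q : Euc n → ℝ), Measurable q → (∀ x, 0 ≤ q x) → LocBdd q →
      ∀ (g : ℝ → ℝ), ContinuousOn g (Set.Ici 0) → (∀ t ∈ Set.Ici (0 : ℝ), 0 ≤ g t) →
        (∀ t : ℝ, 0 < t → 0 < g t) →
      ∀ u : Euc n → ℝ, ContDiff ℝ 1 u → (∀ x, 0 ≤ u x) →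
        IsWeakSol A b α (fun x => q x * g (u x)) Set.univ u →
      ∀ r₁ r₂ : ℝ, 0 < r₁ → r₁ < r₂ → τ ^ (1 / 2 : ℝ) * r₁ ≤ r₂ →
        0 < sphMax u r₂ → sphMax u r₂ ≤ η ^ (1 / 2 : ℝ) * sphMax u r₁ →
        (C * ∫ ξ in Set.Ioc r₁ r₂, (ξ * fdef q b p α τ ξ) ^ (1 / (p - 1))) ≤
            ∫ t in Set.Ioc (sphMax u r₁) (sphMax u r₂), ginf g η t ^ (-(1 / α)) ∨
          (C * ∫ ξ in Set.Ioc r₁ r₂, (ξ * fdef q b p α τ ξ) ^ (1 / (p - 1))) ≤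
            ∫ t in Set.Ioc (sphMax u r₁) (sphMax u r₂), ginf g η t ^ (-(1 / (p - 1))) := by
  obtain ⟨C, hC, hmain⟩ := stmt_aux n hn p C₁ C₂ α hp hC₁ hC₂ hα₁ hα₂ η τ hη hτ
  refine ⟨C, hC, ?_⟩
  intro A hA b hbm hb0 hbL q hqm hq0 hqL g hg hg0 hgp u hu hu0 hw
  exact hmain A b q g u ⟨hp, hC₁, hC₂, hα₁, hα₂, hA, hbm, hb0, hbL, hqm, hq0, hqL, hg, hg0, hgp, hu, hu0, hw⟩
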